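/- arXiv:math/0411162 — 7 statements merged into one kernel-verified Lean document; each statement's English description precedes it below -/
import Mathlib

section
/- Every element of SL(2,ℂ) can be written as a product of two trace-zero elements of SL(2,ℂ). That is, for every A ∈ SL(2,ℂ) there exist B, C ∈ SL(2,ℂ) with tr B = 0, tr C = 0, and A = B·C. -/
/-!
A trace-zero `B` in SL(2,ℂ) satisfies `B⁻¹ = -B`, so `A = B * (B⁻¹ * A)` is a factorization of the
required kind as soon as `tr (B * A) = 0`. For `B = !![x, y; z, -x]` and `A = !![a, b; c, d]` the
conditions are `-x² - y z = 1` and `x (a - d) + y c + z b = 0`. They are solved explicitly: a triangular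
`B` with diagonal `(i, -i)` works when `A` has a nonzero off-diagonal entry, and the quarter turn
`!![0, 1; -1, 0]` works when `A` is diagonal.
-/

open Matrix

/-- The entries `x, y, z` are those of the first factor `!![x, y; z, -x]`; the second hypothesis says
that its product with `A` has trace zero. -/
lemma exists_trace_zero_factors (A : Matrix.SpecialLinearGroup (Fin 2) ℂ) (x y z : ℂ)
    (hdet : -x ^ 2 - y * z = 1)
    (htr : x * (A 0 0 - A 1 1) + y * A 1 0 + z * A 0 1 = 0) :
    ∃ B C : Matrix.SpecialLinearGroup (Fin 2) ℂ,
      Matrix.trace (B : Matrix (Fin 2) (Fin 2) ℂ) = 0 ∧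
      Matrix.trace (C : Matrix (Fin 2) (Fin 2) ℂ) = 0 ∧
      A = B * C := by
  obtain ⟨B, hB⟩ : ∃ B : Matrix.SpecialLinearGroup (Fin 2) ℂ,
      (B : Matrix (Fin 2) (Fin 2) ℂ) = !![x, y; z, -x] :=
    ⟨⟨!![x, y; z, -x], by rw [Matrix.det_fin_two_of]; linear_combination hdet⟩, rfl⟩
  refine ⟨B, B⁻¹ * A, ?_, ?_, (mul_inv_cancel_left B A).symm⟩
  · simp [hB, Matrix.trace_fin_two]
  · rw [Matrix.SpecialLinearGroup.coe_mul, Matrix.SpecialLinearGroup.coe_inv, hB,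
      Matrix.adjugate_fin_two_of]
    simp only [Matrix.trace_fin_two, Matrix.mul_apply, Fin.sum_univ_two, Matrix.of_apply,
      Matrix.cons_val_zero, Matrix.cons_val_one]
    linear_combination -htr

/-- Every element of SL(2,ℂ) is a product of two trace-zero elements of SL(2,ℂ). -/
theorem sl2c_eq_product_of_two_trace_zero
    (A : Matrix.SpecialLinearGroup (Fin 2) ℂ) :
    ∃ B C : Matrix.SpecialLinearGroup (Fin 2) ℂ,
      Matrix.trace (B : Matrix (Fin 2) (Fin 2) ℂ) = 0 ∧
      Matrix.trace (C : Matrix (Fin 2) (Fin 2) ℂ) = 0 ∧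
      A = B * C := by
  by_cases hc : A 1 0 = 0
  · by_cases hb : A 0 1 = 0
    · exact exists_trace_zero_factors A 0 1 (-1) (by norm_num) (by rw [hb, hc]; ring)
    · exact exists_trace_zero_factors A Complex.I 0 (-Complex.I * (A 0 0 - A 1 1) / A 0 1)
        (by simp) (by field_simp; ring)
  · exact exists_trace_zero_factors A Complex.I (-Complex.I * (A 0 0 - A 1 1) / A 1 0) 0
      (by simp) (by field_simp; ring)
end

section
/- Let A ∈ SL(2,ℂ) be loxodromic, i.e. tr A is not real, or tr A is real with |tr A| > 2. Suppose A = B·C with B, C ∈ SL(2,ℂ) and tr B = tr C = 0. Then A has exactly two one-dimensional invariant subspaces ℓ₁ ≠ ℓ₂ of ℂ², and B interchanges ℓ₁ and ℓ₂ (i.e. B·ℓ₁ = ℓ₂ and B·ℓ₂ = ℓ₁); the same holds for C. -/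
/-!
Trace-zero elements of `SL(2,ℂ)` satisfy `B² = C² = -1`, and `BC + CB = tr(BC) • 1`. With
`t = tr A`, the second identity says that `B` conjugates `A = BC` into `t - A = A⁻¹`, so if `v` is
an eigenvector of `A` for `k`, then `w = Bv` is an eigenvector for `t - k = k⁻¹`. Loxodromy gives
`t ≠ ±2`, hence `k ≠ t - k`; so `v, w` is an eigenbasis with distinct eigenvalues, the invariant
lines are exactly `ℂv` and `ℂw`, and `Bw = -v`, `Cv = -k w`, `Cw = (t - k) v` show that `B` and `C`
swap them.
-/

open Matrix

/-- A one-dimensional subspace of `ℂ²` invariant under the matrix `g`. -/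
def IsInvariantLine (g : Matrix (Fin 2) (Fin 2) ℂ) (ℓ : Submodule ℂ (Fin 2 → ℂ)) : Prop :=
  Module.finrank ℂ ℓ = 1 ∧ Submodule.map (Matrix.mulVecLin g) ℓ = ℓ

lemma sq_eq_neg_one_of_trace_zero (M : Matrix (Fin 2) (Fin 2) ℂ) (hd : M.det = 1)
    (ht : M.trace = 0) : M * M = -1 := by
  rw [Matrix.det_fin_two] at hd
  rw [Matrix.trace_fin_two] at ht
  ext i j
  fin_cases i <;> fin_cases j <;> simp [Matrix.mul_apply, Fin.sum_univ_two] <;> grind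

/-- The polarization of Cayley–Hamilton on trace-zero matrices. -/
lemma anticomm_of_trace_zero (M N : Matrix (Fin 2) (Fin 2) ℂ) (hM : M.trace = 0)
    (hN : N.trace = 0) : N * M = (M * N).trace • (1 : Matrix (Fin 2) (Fin 2) ℂ) - M * N := by
  rw [Matrix.trace_fin_two] at hM hN
  ext i j
  fin_cases i <;> fin_cases j <;>
    simp [Matrix.mul_apply, Fin.sum_univ_two, Matrix.trace_fin_two] <;> grind

lemma map_span_of_mulVec_eq_smul (M : Matrix (Fin 2) (Fin 2) ℂ) {x y : Fin 2 → ℂ} {c : ℂ}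
    (hc : c ≠ 0) (h : M *ᵥ x = c • y) :
    Submodule.map (Matrix.mulVecLin M) (ℂ ∙ x) = ℂ ∙ y := by
  rw [Submodule.map_span, Set.image_singleton, Matrix.mulVecLin_apply, h,
    Submodule.span_singleton_smul_eq (IsUnit.mk0 c hc)]

/-- A matrix with two eigenvectors for distinct eigenvalues has no invariant lines other than
the two eigenlines. -/
lemma invariantLine_eq_of_eigenvectors (M : Matrix (Fin 2) (Fin 2) ℂ) {v w : Fin 2 → ℂ} {k l : ℂ}
    (hkl : k ≠ l) (hli : LinearIndependent ℂ ![v, w]) (hv : M *ᵥ v = k • v) (hw : M *ᵥ w = l • w)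
    (ℓ : Submodule ℂ (Fin 2 → ℂ)) (hℓ : IsInvariantLine M ℓ) : ℓ = ℂ ∙ v ∨ ℓ = ℂ ∙ w := by
  obtain ⟨h1, h2⟩ := hℓ
  obtain ⟨u, hu, hu0, rfl⟩ : ∃ u ∈ ℓ, u ≠ 0 ∧ ℓ = ℂ ∙ u := by
    obtain ⟨u, hu0, hu⟩ := finrank_eq_one_iff'.1 h1
    refine ⟨u, u.2, by simpa using hu0, le_antisymm (fun x hx => ?_) ?_⟩
    · obtain ⟨c, hc⟩ := hu ⟨x, hx⟩
      exact Submodule.mem_span_singleton.2 ⟨c, congrArg Subtype.val hc⟩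
    · exact (Submodule.span_singleton_le_iff_mem _ _).2 u.2
  have hMu : M *ᵥ u ∈ ℂ ∙ u := by
    have := Submodule.mem_map_of_mem (f := Matrix.mulVecLin M) hu
    rwa [h2] at this
  obtain ⟨m, hm⟩ := Submodule.mem_span_singleton.1 hMu
  have htop : u ∈ Submodule.span ℂ (Set.range ![v, w]) := by
    rw [hli.span_eq_top_of_card_eq_finrank (by simp)]; trivial
  rw [Matrix.range_cons_cons_empty, Submodule.mem_span_pair] at htop
  obtain ⟨a, b, rfl⟩ := htop
  rw [Matrix.mulVec_add, Matrix.mulVec_smul, Matrix.mulVec_smul, hv, hw] at hm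
  obtain ⟨ha, hb⟩ := LinearIndependent.pair_iff.1 hli (a * (m - k)) (b * (m - l)) (by
    rw [← sub_eq_zero] at hm; rw [← hm]; module)
  by_cases ha0 : a = 0
  · subst ha0
    have hb0 : b ≠ 0 := by rintro rfl; simp at hu0
    right
    rw [zero_smul, zero_add, Submodule.span_singleton_smul_eq (IsUnit.mk0 b hb0)]
  · have hb0 : b = 0 := by grind
    left
    rw [hb0, zero_smul, add_zero, Submodule.span_singleton_smul_eq (IsUnit.mk0 a ha0)]

/-- If `A ∈ SL(2,ℂ)` is loxodromic (trace not real, or real with absolute value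
greater than 2) and `A = B * C` with `B, C` trace-zero, then `A` has exactly two
invariant lines `ℓ₁ ≠ ℓ₂` in `ℂ²`, and both `B` and `C` interchange `ℓ₁` and `ℓ₂`. -/
theorem trace_zero_factors_swap_invariant_lines_of_loxodromic
    (A B C : Matrix.SpecialLinearGroup (Fin 2) ℂ)
    (hlox : (∀ r : ℝ, Matrix.trace (A : Matrix (Fin 2) (Fin 2) ℂ) ≠ (r : ℂ)) ∨
      (∃ r : ℝ, Matrix.trace (A : Matrix (Fin 2) (Fin 2) ℂ) = (r : ℂ) ∧ |r| > 2))
    (hB : Matrix.trace (B : Matrix (Fin 2) (Fin 2) ℂ) = 0)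
    (hC : Matrix.trace (C : Matrix (Fin 2) (Fin 2) ℂ) = 0)
    (hA : A = B * C) :
    ∃ ℓ₁ ℓ₂ : Submodule ℂ (Fin 2 → ℂ), ℓ₁ ≠ ℓ₂ ∧
      IsInvariantLine (A : Matrix (Fin 2) (Fin 2) ℂ) ℓ₁ ∧
      IsInvariantLine (A : Matrix (Fin 2) (Fin 2) ℂ) ℓ₂ ∧
      (∀ ℓ : Submodule ℂ (Fin 2 → ℂ),
        IsInvariantLine (A : Matrix (Fin 2) (Fin 2) ℂ) ℓ → ℓ = ℓ₁ ∨ ℓ = ℓ₂) ∧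
      Submodule.map (Matrix.mulVecLin (B : Matrix (Fin 2) (Fin 2) ℂ)) ℓ₁ = ℓ₂ ∧
      Submodule.map (Matrix.mulVecLin (B : Matrix (Fin 2) (Fin 2) ℂ)) ℓ₂ = ℓ₁ ∧
      Submodule.map (Matrix.mulVecLin (C : Matrix (Fin 2) (Fin 2) ℂ)) ℓ₁ = ℓ₂ ∧
      Submodule.map (Matrix.mulVecLin (C : Matrix (Fin 2) (Fin 2) ℂ)) ℓ₂ = ℓ₁ := by
  have ht4 : (A : Matrix (Fin 2) (Fin 2) ℂ).trace ^ 2 ≠ 4 := by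
    intro h
    obtain ⟨s, hs, hs2⟩ : ∃ s : ℝ, (A : Matrix (Fin 2) (Fin 2) ℂ).trace = s ∧ |s| = 2 := by
      have h' : ((A : Matrix (Fin 2) (Fin 2) ℂ).trace - 2) *
          ((A : Matrix (Fin 2) (Fin 2) ℂ).trace + 2) = 0 := by linear_combination h
      rcases mul_eq_zero.1 h' with h' | h'
      · exact ⟨2, by push_cast; linear_combination h', by norm_num⟩
      · exact ⟨-2, by push_cast; linear_combination h', by norm_num⟩
    rcases hlox with hr | ⟨r, hr, hr2⟩
    · exact hr s hs
    · rw [hs] at hr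
      rw [← Complex.ofReal_injective hr] at hr2
      exact hr2.ne' hs2
  have hAm : (A : Matrix (Fin 2) (Fin 2) ℂ) = B.1 * C.1 := by rw [hA]; rfl
  have hBB := sq_eq_neg_one_of_trace_zero B.1 B.2 hB
  have hCC := sq_eq_neg_one_of_trace_zero C.1 C.2 hC
  have hCB := anticomm_of_trace_zero B.1 C.1 hB hC
  rw [← hAm] at hCB
  set t := (A : Matrix (Fin 2) (Fin 2) ℂ).trace with ht
  obtain ⟨k, hk⟩ := Module.End.exists_eigenvalue (Matrix.mulVecLin (A : Matrix (Fin 2) (Fin 2) ℂ))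
  obtain ⟨v, hv⟩ := hk.exists_hasEigenvector
  have hv0 : v ≠ 0 := hv.2
  have hAv : A.1 *ᵥ v = k • v := hv.apply_eq_smul
  have hBBv (x : Fin 2 → ℂ) : B.1 *ᵥ (B.1 *ᵥ x) = -x := by
    rw [Matrix.mulVec_mulVec, hBB, Matrix.neg_mulVec, Matrix.one_mulVec]
  have hCCv (x : Fin 2 → ℂ) : C.1 *ᵥ (C.1 *ᵥ x) = -x := by
    rw [Matrix.mulVec_mulVec, hCC, Matrix.neg_mulVec, Matrix.one_mulVec]
  have hBCv (x : Fin 2 → ℂ) : B.1 *ᵥ (C.1 *ᵥ x) = A.1 *ᵥ x := by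
    rw [Matrix.mulVec_mulVec, hAm]
  have hCw : C.1 *ᵥ (B.1 *ᵥ v) = (t - k) • v := by
    rw [Matrix.mulVec_mulVec, hCB, Matrix.sub_mulVec, Matrix.smul_mulVec, Matrix.one_mulVec, hAv,
      sub_smul]
  have hCv : C.1 *ᵥ v = (-k) • (B.1 *ᵥ v) := by
    rw [← neg_neg (C.1 *ᵥ v), ← hBBv (C.1 *ᵥ v), hBCv, hAv, Matrix.mulVec_smul, neg_smul]
  have hBw : B.1 *ᵥ (B.1 *ᵥ v) = (-1 : ℂ) • v := by rw [hBBv, neg_one_smul]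
  have hAw : A.1 *ᵥ (B.1 *ᵥ v) = (t - k) • (B.1 *ᵥ v) := by
    rw [← hBCv, hCw, Matrix.mulVec_smul]
  -- Applying `C² = -1` to `v` identifies `t - k` as the inverse of `k`.
  have hk1 : k * (t - k) = 1 := by
    have h := hCCv v
    rw [hCv, Matrix.mulVec_smul, hCw, smul_smul, ← neg_one_smul ℂ v] at h
    linear_combination -(smul_left_injective ℂ hv0 h)
  have hk0 : k ≠ 0 := left_ne_zero_of_mul_eq_one hk1
  have hl0 : t - k ≠ 0 := right_ne_zero_of_mul_eq_one hk1
  have hkl : k ≠ t - k := by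
    intro h
    apply ht4
    linear_combination 4 * hk1 + (2 * k - t) * h
  have hw0 : B.1 *ᵥ v ≠ 0 := by
    intro h
    have := hBBv v
    rw [h, Matrix.mulVec_zero] at this
    exact hv0 (neg_eq_zero.1 this.symm)
  have hli : LinearIndependent ℂ ![v, B.1 *ᵥ v] := by
    refine Module.End.eigenvectors_linearIndependent' (Matrix.mulVecLin A.1) ![k, t - k] ?_ _ ?_
    · intro i j hij
      fin_cases i <;> fin_cases j <;> simp_all
    · intro i
      fin_cases i
      · exact hv
      · exact ⟨Module.End.mem_eigenspace_iff.2 hAw, hw0⟩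
  refine ⟨ℂ ∙ v, ℂ ∙ (B.1 *ᵥ v), ?_,
    ⟨finrank_span_singleton hv0, map_span_of_mulVec_eq_smul _ hk0 hAv⟩,
    ⟨finrank_span_singleton hw0, map_span_of_mulVec_eq_smul _ hl0 hAw⟩,
    invariantLine_eq_of_eigenvectors _ hkl hli hAv hAw,
    map_span_of_mulVec_eq_smul _ one_ne_zero (one_smul _ _).symm,
    map_span_of_mulVec_eq_smul _ (neg_ne_zero.2 one_ne_zero) hBw,
    map_span_of_mulVec_eq_smul _ (neg_ne_zero.2 hk0) hCv,
    map_span_of_mulVec_eq_smul _ hl0 hCw⟩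
  intro h
  obtain ⟨c, hc⟩ := Submodule.mem_span_singleton.1 (h ▸ Submodule.mem_span_singleton_self v)
  have := (LinearIndependent.pair_iff.1 hli 1 (-c) (by rw [neg_smul, hc, one_smul, add_neg_cancel])).1
  exact one_ne_zero this
end

section
/- Let B, C ∈ SL(2,ℂ) with tr B = 0 and tr C = 0. Then tr(B·C) ∈ {2, -2} if and only if B and C have a common eigenvector, i.e. there exists a nonzero v ∈ ℂ² that is an eigenvector of both B and C. -/
/-!
A trace-zero matrix of `SL(2,ℂ)` squares to `-1`, and two of them satisfy
`B * C + C * B = t • 1` with `t = tr (B * C)`.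

If `B v = μ v` and `C v = ν v` with `v ≠ 0`, these relations give `μ ^ 2 = ν ^ 2 = -1` and
`t = 2 * μ * ν`, so `t ^ 2 = 4`.

Conversely, let `t = 2 * s` with `s ^ 2 = 1` and put `N = B + s • C`. Then `N ^ 2 = 0` and `N`
anticommutes with `B`. If `N = 0`, then `B` and `C` are proportional and any eigenvector of `B`
works. Otherwise `ker N` is a line, it is stable under `B`, and on it `C` acts as `-s • B`; so it is
spanned by a common eigenvector.
-/

open Matrix

theorem sq_eq_neg_one_of_trace_zero_s3 (B : Matrix.SpecialLinearGroup (Fin 2) ℂ)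
    (hB : Matrix.trace (B : Matrix (Fin 2) (Fin 2) ℂ) = 0) :
    (B : Matrix (Fin 2) (Fin 2) ℂ) * (B : Matrix (Fin 2) (Fin 2) ℂ) = -1 := by
  have hd := B.det_coe
  rw [Matrix.det_fin_two] at hd
  rw [Matrix.trace_fin_two] at hB
  ext i j
  fin_cases i <;> fin_cases j <;> simp [Matrix.mul_apply, Fin.sum_univ_two] <;> grind

/-- The polarized Cayley–Hamilton identity for trace-zero matrices. -/
theorem anticommutator_of_trace_zero (B C : Matrix (Fin 2) (Fin 2) ℂ)
    (hB : Matrix.trace B = 0) (hC : Matrix.trace C = 0) :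
    B * C + C * B = Matrix.trace (B * C) • (1 : Matrix (Fin 2) (Fin 2) ℂ) := by
  rw [Matrix.trace_fin_two] at hB hC
  ext i j
  fin_cases i <;> fin_cases j <;>
    simp [Matrix.mul_apply, Fin.sum_univ_two, Matrix.trace_fin_two] <;> grind

/-- The kernel of a nonzero `2 × 2` matrix is at most a line. -/
theorem exists_smul_of_mulVec_eq_zero {N : Matrix (Fin 2) (Fin 2) ℂ} (hN : N ≠ 0)
    {v w : Fin 2 → ℂ} (hv : v ≠ 0) (hNv : N *ᵥ v = 0) (hNw : N *ᵥ w = 0) :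
    ∃ μ : ℂ, w = μ • v := by
  have hdet : v 0 * w 1 = v 1 * w 0 := by
    by_contra hne
    apply hN
    ext i j
    have h1 := congrFun hNv i
    have h2 := congrFun hNw i
    simp only [Matrix.mulVec, dotProduct, Fin.sum_univ_two, Pi.zero_apply] at h1 h2
    have hd : v 0 * w 1 - v 1 * w 0 ≠ 0 := sub_ne_zero.mpr hne
    apply (mul_eq_zero.mp (?_ : N i j * (v 0 * w 1 - v 1 * w 0) = 0)).resolve_right hd
    fin_cases j <;> simp only [Fin.zero_eta, Fin.mk_one]
    · linear_combination w 1 * h1 - v 1 * h2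
    · linear_combination v 0 * h2 - w 0 * h1
  by_cases h0 : v 0 = 0
  · have h1 : v 1 ≠ 0 := by
      intro h1
      apply hv
      ext i
      fin_cases i <;> simp [h0, h1]
    have hw : w 0 = 0 := by simpa [h0, h1] using hdet
    refine ⟨w 1 / v 1, ?_⟩
    ext i
    fin_cases i <;> simp [h0, h1, hw]
  · refine ⟨w 0 / v 0, ?_⟩
    ext i
    fin_cases i <;> simp
    · field_simp
    · field_simp
      linear_combination hdet

theorem common_eigenvector_of_anticommutator {B C : Matrix (Fin 2) (Fin 2) ℂ} {s : ℂ}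
    (hs : s * s = 1) (hBB : B * B = -1) (hCC : C * C = -1)
    (hBC : B * C + C * B = (2 * s) • (1 : Matrix (Fin 2) (Fin 2) ℂ)) :
    ∃ v : Fin 2 → ℂ, v ≠ 0 ∧ (∃ μ : ℂ, B *ᵥ v = μ • v) ∧ (∃ ν : ℂ, C *ᵥ v = ν • v) := by
  -- Since `s⁻¹ = s`, it is enough that `B v = μ v` and `(B + s • C) v = 0`.
  have key : ∀ v : Fin 2 → ℂ, v ≠ 0 → (B + s • C) *ᵥ v = 0 → (∃ μ : ℂ, B *ᵥ v = μ • v) →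
      ∃ v : Fin 2 → ℂ, v ≠ 0 ∧ (∃ μ : ℂ, B *ᵥ v = μ • v) ∧ (∃ ν : ℂ, C *ᵥ v = ν • v) := by
    rintro v hv hNv ⟨μ, hμ⟩
    refine ⟨v, hv, ⟨μ, hμ⟩, -(s * μ), ?_⟩
    rw [Matrix.add_mulVec, Matrix.smul_mulVec, hμ] at hNv
    have h := congrArg (fun u => s • u) hNv
    simp only [smul_add, smul_smul, hs, one_smul, smul_zero] at h
    rw [neg_smul]
    exact eq_neg_of_add_eq_zero_right h
  have hNN : (B + s • C) * (B + s • C) = 0 := by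
    have h : (B + s • C) * (B + s • C) = B * B + s • (B * C + C * B) + (s * s) • (C * C) := by
      simp only [mul_add, add_mul, smul_mul_assoc, mul_smul_comm, smul_add, smul_smul]
      abel
    rw [h, hBB, hCC, hBC, hs, smul_smul, show s * (2 * s) = 2 by linear_combination 2 * hs,
      two_smul, one_smul]
    abel
  have hNB : (B + s • C) * B = -(B * (B + s • C)) := by
    have h : (B + s • C) * B + B * (B + s • C) = B * B + B * B + s • (B * C + C * B) := by
      simp only [mul_add, add_mul, smul_mul_assoc, mul_smul_comm, smul_add]
      abel
    refine eq_neg_of_add_eq_zero_left (h.trans ?_)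
    rw [hBB, hBC, smul_smul, show s * (2 * s) = 2 by linear_combination 2 * hs, two_smul]
    abel
  by_cases hN : B + s • C = 0
  · obtain ⟨μ, hμ⟩ := Module.End.exists_eigenvalue (Matrix.toLin' B)
    obtain ⟨v, hv⟩ := hμ.exists_hasEigenvector
    exact key v hv.2 (by rw [hN, Matrix.zero_mulVec]) ⟨μ, by simpa using hv.apply_eq_smul⟩
  · have hdet : (B + s • C).det = 0 := by
      have h := congrArg Matrix.det hNN
      simpa using h
    obtain ⟨v, hv, hNv⟩ := Matrix.exists_mulVec_eq_zero_iff.mpr hdet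
    refine key v hv hNv (exists_smul_of_mulVec_eq_zero hN hv hNv ?_)
    rw [Matrix.mulVec_mulVec, hNB, Matrix.neg_mulVec, ← Matrix.mulVec_mulVec, hNv,
      Matrix.mulVec_zero, neg_zero]

/-- For trace-zero `B, C ∈ SL(2,ℂ)`, the product `B * C` has trace `±2` iff
`B` and `C` have a common eigenvector in `ℂ²`. -/
theorem trace_mul_eq_pm_two_iff_common_eigenvector
    (B C : Matrix.SpecialLinearGroup (Fin 2) ℂ)
    (hB : Matrix.trace (B : Matrix (Fin 2) (Fin 2) ℂ) = 0)
    (hC : Matrix.trace (C : Matrix (Fin 2) (Fin 2) ℂ) = 0) :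
    (Matrix.trace ((B * C : Matrix.SpecialLinearGroup (Fin 2) ℂ) :
        Matrix (Fin 2) (Fin 2) ℂ) = 2 ∨
     Matrix.trace ((B * C : Matrix.SpecialLinearGroup (Fin 2) ℂ) :
        Matrix (Fin 2) (Fin 2) ℂ) = -2) ↔
    ∃ v : Fin 2 → ℂ, v ≠ 0 ∧
      (∃ μ : ℂ, Matrix.mulVec (B : Matrix (Fin 2) (Fin 2) ℂ) v = μ • v) ∧
      (∃ ν : ℂ, Matrix.mulVec (C : Matrix (Fin 2) (Fin 2) ℂ) v = ν • v) := by
  have hBB := sq_eq_neg_one_of_trace_zero_s3 B hB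
  have hCC := sq_eq_neg_one_of_trace_zero_s3 C hC
  have hBC := anticommutator_of_trace_zero _ _ hB hC
  rw [Matrix.SpecialLinearGroup.coe_mul]
  constructor
  · rintro (h | h)
    · exact common_eigenvector_of_anticommutator (s := 1) (by norm_num) hBB hCC
        (by rw [hBC, h, mul_one])
    · exact common_eigenvector_of_anticommutator (s := -1) (by norm_num) hBB hCC
        (by rw [hBC, h, mul_neg_one])
  · rintro ⟨v, hv, ⟨μ, hμ⟩, ν, hν⟩
    have cancel : ∀ {a b : ℂ}, a • v = b • v → a = b := fun h => smul_left_injective ℂ hv h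
    have h1 : μ * μ = -1 := by
      apply cancel
      have h := congrArg (· *ᵥ v) hBB
      simpa [← Matrix.mulVec_mulVec, hμ, Matrix.mulVec_smul, smul_smul, Matrix.neg_mulVec] using h
    have h2 : ν * ν = -1 := by
      apply cancel
      have h := congrArg (· *ᵥ v) hCC
      simpa [← Matrix.mulVec_mulVec, hν, Matrix.mulVec_smul, smul_smul, Matrix.neg_mulVec] using h
    have h3 : ν * μ + μ * ν = Matrix.trace ((B : Matrix (Fin 2) (Fin 2) ℂ) *
        (C : Matrix (Fin 2) (Fin 2) ℂ)) := by
      apply cancel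
      have h := congrArg (· *ᵥ v) hBC
      simp only [Matrix.add_mulVec, ← Matrix.mulVec_mulVec, hμ, hν, Matrix.mulVec_smul, smul_smul,
        Matrix.smul_mulVec, Matrix.one_mulVec] at h
      rw [add_smul, h]
    rw [← h3]
    apply sq_eq_sq_iff_eq_or_eq_neg.mp
    linear_combination 4 * ν * ν * h1 - 4 * h2
end

section
/- Let B, C ∈ SL(2,ℂ) with tr B = 0, tr C = 0, and C ≠ B and C ≠ -B. Then tr(B·C) is real with |tr(B·C)| < 2 if and only if there exists M ∈ SL(2,ℂ) such that M·B·M⁻¹ and M·C·M⁻¹ are both unitary (i.e. both lie in SU(2)). -/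
/-!
Both directions go through normal forms. A trace-zero element of SU(2) is
`!![i x, y + i z; -y + i z, -i x]` with `(x, y, z)` a unit vector of `ℝ³`
(`exists_coords_of_mem_unitaryGroup`), and for two of them with vectors `u, v` the trace of the
product is `-2 ⟨u, v⟩`. This is real, and it lies strictly between `-2` and `2` because `u ≠ ±v`.

Conversely, a trace-zero `B` is diagonalizable with eigenvalues `±i` (`exists_conj_diagonal`).
When `B = diag(i, -i)` and `C = !![a, b; c, -a]`, the trace of `B * C` is `2 i a`, so `a` is purely
imaginary and `b c = r ^ 2 / 4 - 1 < 0`. Conjugation by `diag(t, t⁻¹)` fixes `B` and multiplies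
`b` by `t ^ 2` and `c` by `t ^ (-2)`; the choice `t ^ 4 = |c| / |b|` gives `c = -conj b`, which
makes `C` unitary (`exists_conj_unitary_of_diagonal`).
-/

open Matrix

instance : Fact (Even (Fintype.card (Fin 2))) := ⟨by decide⟩

local notation "SL2" => Matrix.SpecialLinearGroup (Fin 2) ℂ

/-- A trace-zero element of SU(2) is a unit purely imaginary quaternion. -/
lemma exists_coords_of_mem_unitaryGroup (U : SL2)
    (hU : (U : Matrix (Fin 2) (Fin 2) ℂ) ∈ Matrix.unitaryGroup (Fin 2) ℂ)
    (htr : Matrix.trace (U : Matrix (Fin 2) (Fin 2) ℂ) = 0) :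
    ∃ x y z : ℝ, x ^ 2 + y ^ 2 + z ^ 2 = 1 ∧
      (U : Matrix (Fin 2) (Fin 2) ℂ) =
        !![Complex.I * x, y + Complex.I * z; -y + Complex.I * z, -(Complex.I * x)] := by
  have hstar : star (U : Matrix (Fin 2) (Fin 2) ℂ) = (U : Matrix (Fin 2) (Fin 2) ℂ).adjugate := by
    have h1 := Matrix.mem_unitaryGroup_iff.1 hU
    have h2 : (U : Matrix (Fin 2) (Fin 2) ℂ).adjugate * (U : Matrix (Fin 2) (Fin 2) ℂ) = 1 := by
      rw [Matrix.adjugate_mul, U.det_coe, one_smul]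
    exact (left_inv_eq_right_inv h2 h1).symm
  have hdet := U.det_coe
  generalize (U : Matrix (Fin 2) (Fin 2) ℂ) = A at *
  rw [Matrix.adjugate_fin_two] at hstar
  have h00 := congrFun (congrFun hstar 0) 0
  have h10 := congrFun (congrFun hstar 1) 0
  simp [Matrix.star_apply] at h00 h10
  rw [Matrix.det_fin_two] at hdet
  rw [Matrix.trace_fin_two] at htr
  have e11 : A 1 1 = -A 0 0 := by linear_combination htr
  have e10 : A 1 0 = -(starRingEnd ℂ) (A 0 1) := by rw [h10]; ring
  have hre : (A 0 0).re = 0 := by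
    have := congrArg Complex.re (h00.trans e11)
    simp at this
    linarith
  refine ⟨(A 0 0).im, (A 0 1).re, (A 0 1).im, ?_, ?_⟩
  · rw [e11, e10] at hdet
    have := congrArg Complex.re hdet
    simp [hre] at this
    linarith
  · ext i j
    fin_cases i <;> fin_cases j <;> simp [Complex.ext_iff, e11, e10, hre]

lemma exists_trace_eq_of_mem_unitaryGroup (U V : SL2)
    (hU : (U : Matrix (Fin 2) (Fin 2) ℂ) ∈ Matrix.unitaryGroup (Fin 2) ℂ)
    (hV : (V : Matrix (Fin 2) (Fin 2) ℂ) ∈ Matrix.unitaryGroup (Fin 2) ℂ)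
    (hUt : Matrix.trace (U : Matrix (Fin 2) (Fin 2) ℂ) = 0)
    (hVt : Matrix.trace (V : Matrix (Fin 2) (Fin 2) ℂ) = 0)
    (hne : V ≠ U) (hne' : V ≠ -U) :
    ∃ r : ℝ, Matrix.trace ((U * V : SL2) : Matrix (Fin 2) (Fin 2) ℂ) = (r : ℂ) ∧ |r| < 2 := by
  obtain ⟨x, y, z, h, eU⟩ := exists_coords_of_mem_unitaryGroup U hU hUt
  obtain ⟨x', y', z', h', eV⟩ := exists_coords_of_mem_unitaryGroup V hV hVt
  refine ⟨-2 * (x * x' + y * y' + z * z'), ?_, ?_⟩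
  · rw [Matrix.SpecialLinearGroup.coe_mul, eU, eV]
    simp [Matrix.trace_fin_two, Complex.ext_iff]
    constructor <;> ring
  · -- `2 ± 2 ⟨u, v⟩ = ‖u ± v‖ ^ 2`, and a vanishing norm would force `v = ∓u`.
    rw [abs_lt]
    constructor
    · by_contra! hle
      have hx : x' = x := by nlinarith [sq_nonneg (x' - x), sq_nonneg (y' - y), sq_nonneg (z' - z)]
      have hy : y' = y := by nlinarith [sq_nonneg (x' - x), sq_nonneg (y' - y), sq_nonneg (z' - z)]
      have hz : z' = z := by nlinarith [sq_nonneg (x' - x), sq_nonneg (y' - y), sq_nonneg (z' - z)]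
      exact hne (Subtype.ext (by rw [eU, eV, hx, hy, hz]))
    · by_contra! hle
      have hx : x' = -x := by
        nlinarith [sq_nonneg (x' + x), sq_nonneg (y' + y), sq_nonneg (z' + z)]
      have hy : y' = -y := by
        nlinarith [sq_nonneg (x' + x), sq_nonneg (y' + y), sq_nonneg (z' + z)]
      have hz : z' = -z := by
        nlinarith [sq_nonneg (x' + x), sq_nonneg (y' + y), sq_nonneg (z' + z)]
      refine hne' (Subtype.ext ?_)
      rw [Matrix.SpecialLinearGroup.coe_neg, eU, eV, hx, hy, hz]
      ext i j
      fin_cases i <;> fin_cases j <;> simp <;> ring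

/-- The eigenvector matrix used here degenerates exactly when `B 0 0 = -i`. -/
lemma exists_conj_diagonal (B : SL2)
    (hB : Matrix.trace (B : Matrix (Fin 2) (Fin 2) ℂ) = 0)
    (hp : B 0 0 + Complex.I ≠ 0) :
    ∃ M : SL2, ((M * B * M⁻¹ : SL2) : Matrix (Fin 2) (Fin 2) ℂ) =
      !![Complex.I, 0; 0, -Complex.I] := by
  have hdet := B.det_coe
  rw [Matrix.det_fin_two] at hdet
  rw [Matrix.trace_fin_two] at hB
  have e11 : B 1 1 = -B 0 0 := by linear_combination hB
  rw [e11] at hdet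
  have hI := Complex.I_sq
  -- The rows are left eigenvectors of `B` for `i` and `-i`, the first one rescaled so that the
  -- determinant is `1`.
  let k : ℂ := (-2 * Complex.I * (B 0 0 + Complex.I))⁻¹
  have hk : k * (-2 * Complex.I * (B 0 0 + Complex.I)) = 1 :=
    inv_mul_cancel₀ (by simp [hp])
  let N : Matrix (Fin 2) (Fin 2) ℂ :=
    !![k * (B 0 0 + Complex.I), k * B 0 1; B 1 0, -(B 0 0 + Complex.I)]
  have hN : N.det = 1 := by
    rw [← hk]
    simp only [N, Matrix.det_fin_two_of]
    linear_combination k * hdet + k * hI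
  obtain ⟨P, hP⟩ : ∃ P : SL2, (P : Matrix (Fin 2) (Fin 2) ℂ) = N := ⟨⟨N, hN⟩, rfl⟩
  refine ⟨P, ?_⟩
  have hcomm : N * (B : Matrix (Fin 2) (Fin 2) ℂ) = !![Complex.I, 0; 0, -Complex.I] * N := by
    rw [Matrix.eta_fin_two (B : Matrix (Fin 2) (Fin 2) ℂ), e11]
    ext i j
    fin_cases i <;> fin_cases j <;> simp [N, Matrix.mul_apply, Fin.sum_univ_two]
    · linear_combination -k * hdet - k * hI
    · ring
    · ring
    · linear_combination -hdet - hI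
  rw [Matrix.SpecialLinearGroup.coe_mul, Matrix.SpecialLinearGroup.coe_mul,
    Matrix.SpecialLinearGroup.coe_inv, hP, hcomm, Matrix.mul_assoc, Matrix.mul_adjugate, hN, one_smul, Matrix.mul_one]

lemma exists_conj_unitary_of_diagonal (D C : SL2)
    (hD : (D : Matrix (Fin 2) (Fin 2) ℂ) = !![Complex.I, 0; 0, -Complex.I])
    (hC : Matrix.trace (C : Matrix (Fin 2) (Fin 2) ℂ) = 0) (r : ℝ)
    (htr : Matrix.trace ((D * C : SL2) : Matrix (Fin 2) (Fin 2) ℂ) = (r : ℂ)) (hr : |r| < 2) :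
    ∃ M : SL2,
      ((M * D * M⁻¹ : SL2) : Matrix (Fin 2) (Fin 2) ℂ) ∈ Matrix.unitaryGroup (Fin 2) ℂ ∧
      ((M * C * M⁻¹ : SL2) : Matrix (Fin 2) (Fin 2) ℂ) ∈ Matrix.unitaryGroup (Fin 2) ℂ := by
  have hdet := C.det_coe
  rw [Matrix.det_fin_two] at hdet
  rw [Matrix.trace_fin_two] at hC
  have e11 : C 1 1 = -C 0 0 := by linear_combination hC
  rw [Matrix.SpecialLinearGroup.coe_mul, hD, Matrix.trace_fin_two] at htr
  simp [Matrix.mul_apply, Fin.sum_univ_two, e11] at htr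
  have hI := Complex.I_sq
  have e00 : C 0 0 = -(Complex.I * (r / 2 : ℝ)) := by
    push_cast
    linear_combination -(Complex.I / 2) * htr + C 0 0 * hI
  rw [e11, e00] at hdet
  set s : ℝ := r / 2 with hs
  have hs1 : s ^ 2 < 1 := by
    rw [abs_lt] at hr
    nlinarith
  set b := C 0 1 with hb
  set c := C 1 0 with hc
  have hbc : b * c = -((1 - s ^ 2 : ℝ) : ℂ) := by
    push_cast
    linear_combination -hdet - s ^ 2 * hI
  have hb0 : b ≠ 0 := by
    rintro h
    rw [h, zero_mul, eq_comm, neg_eq_zero, Complex.ofReal_eq_zero] at hbc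
    linarith
  have hnb : 0 < Complex.normSq b := Complex.normSq_pos.2 hb0
  -- The right-hand side is `|c| / |b|`, because `b * c = -(1 - s ^ 2)`.
  obtain ⟨t, ht, htl⟩ : ∃ t : ℝ, 0 < t ∧ t ^ 4 = (1 - s ^ 2) / Complex.normSq b := by
    have hl : 0 < (1 - s ^ 2) / Complex.normSq b := div_pos (by linarith) hnb
    refine ⟨√√((1 - s ^ 2) / Complex.normSq b), by positivity, ?_⟩
    rw [show (4 : ℕ) = 2 * 2 from rfl, pow_mul, Real.sq_sqrt (by positivity), Real.sq_sqrt hl.le]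
  have ht0 : (t : ℂ) ≠ 0 := by exact_mod_cast ht.ne'
  have htb : t ^ 4 * Complex.normSq b = 1 - s ^ 2 := by rw [htl]; field_simp
  have hcb : c = -((t : ℂ) ^ 4 * (starRingEnd ℂ) b) := by
    apply mul_left_cancel₀ hb0
    rw [hbc, ← htb]
    push_cast
    rw [← Complex.mul_conj]
    ring
  have hN : (!![(t : ℂ), 0; 0, (t : ℂ)⁻¹]).det = 1 := by simp [ht0]
  have hadj : (!![(t : ℂ), 0; 0, (t : ℂ)⁻¹]).adjugate = !![(t : ℂ)⁻¹, 0; 0, (t : ℂ)] := by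
    simp [Matrix.adjugate_fin_two]
  have hCe : (C : Matrix (Fin 2) (Fin 2) ℂ) =
      !![-(Complex.I * s), b; -((t : ℂ) ^ 4 * (starRingEnd ℂ) b), Complex.I * s] := by
    rw [Matrix.eta_fin_two (C : Matrix (Fin 2) (Fin 2) ℂ), ← hcb, ← hb, ← hc, e11, e00, neg_neg]
  obtain ⟨P, hP⟩ : ∃ P : SL2, (P : Matrix (Fin 2) (Fin 2) ℂ) = !![(t : ℂ), 0; 0, (t : ℂ)⁻¹] :=
    ⟨⟨_, hN⟩, rfl⟩
  refine ⟨P, ?_, ?_⟩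
  · have : ((P * D * P⁻¹ : SL2) : Matrix (Fin 2) (Fin 2) ℂ) =
        !![Complex.I, 0; 0, -Complex.I] := by
      rw [Matrix.SpecialLinearGroup.coe_mul, Matrix.SpecialLinearGroup.coe_mul,
        Matrix.SpecialLinearGroup.coe_inv, hP, hD, hadj]
      simp
      field_simp
      simp
    rw [this, Matrix.mem_unitaryGroup_iff]
    ext i j
    fin_cases i <;> fin_cases j <;> simp [Matrix.mul_apply, Fin.sum_univ_two]
  · have : ((P * C * P⁻¹ : SL2) : Matrix (Fin 2) (Fin 2) ℂ) =
        !![-(Complex.I * s), t ^ 2 * b; -(t ^ 2 * (starRingEnd ℂ) b), Complex.I * s] := by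
      rw [Matrix.SpecialLinearGroup.coe_mul, Matrix.SpecialLinearGroup.coe_mul,
        Matrix.SpecialLinearGroup.coe_inv, hP, hCe, hadj]
      ext i j
      fin_cases i <;> fin_cases j <;> simp [Matrix.mul_apply, Fin.sum_univ_two] <;> field_simp
    have hsum : (t : ℂ) ^ 4 * (b * (starRingEnd ℂ) b) = 1 - (s : ℂ) ^ 2 := by
      rw [Complex.mul_conj]
      exact_mod_cast htb
    rw [this, Matrix.mem_unitaryGroup_iff]
    ext i j
    fin_cases i <;> fin_cases j <;> simp [Matrix.mul_apply, Fin.sum_univ_two]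
    · linear_combination hsum - s ^ 2 * hI
    · ring
    · ring
    · linear_combination hsum - s ^ 2 * hI

lemma trace_conj_coe (M A : SL2) :
    Matrix.trace ((M * A * M⁻¹ : SL2) : Matrix (Fin 2) (Fin 2) ℂ) =
      Matrix.trace (A : Matrix (Fin 2) (Fin 2) ℂ) := by
  rw [Matrix.SpecialLinearGroup.coe_mul, Matrix.trace_mul_comm,
    ← Matrix.SpecialLinearGroup.coe_mul, inv_mul_cancel_left]

lemma conj_conj {G : Type*} [Group G] (M N A : G) :
    M * (N * A * N⁻¹) * M⁻¹ = M * N * A * (M * N)⁻¹ := by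
  group

/-- The implication from traces to unitarity, apart from the case `B 0 0 = -i`, which `exists_conj_diagonal`
leaves out. -/
lemma exists_conj_unitary_of_ne (B C : SL2)
    (hB : Matrix.trace (B : Matrix (Fin 2) (Fin 2) ℂ) = 0)
    (hC : Matrix.trace (C : Matrix (Fin 2) (Fin 2) ℂ) = 0)
    (hp : B 0 0 + Complex.I ≠ 0) (r : ℝ)
    (htr : Matrix.trace ((B * C : SL2) : Matrix (Fin 2) (Fin 2) ℂ) = (r : ℂ)) (hr : |r| < 2) :
    ∃ M : SL2,
      ((M * B * M⁻¹ : SL2) : Matrix (Fin 2) (Fin 2) ℂ) ∈ Matrix.unitaryGroup (Fin 2) ℂ ∧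
      ((M * C * M⁻¹ : SL2) : Matrix (Fin 2) (Fin 2) ℂ) ∈ Matrix.unitaryGroup (Fin 2) ℂ := by
  obtain ⟨N, hN⟩ := exists_conj_diagonal B hB hp
  have htr' : Matrix.trace (((N * B * N⁻¹) * (N * C * N⁻¹) : SL2) :
      Matrix (Fin 2) (Fin 2) ℂ) = (r : ℂ) := by
    rw [conj_mul, trace_conj_coe, htr]
  obtain ⟨M, h1, h2⟩ := exists_conj_unitary_of_diagonal _ (N * C * N⁻¹) hN
    (by rw [trace_conj_coe, hC]) r htr' hr
  rw [conj_conj] at h1 h2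
  exact ⟨M * N, h1, h2⟩

/-- For distinct half-turns `B, C` (trace-zero elements of SL(2,ℂ) with `C ≠ ±B`),
the product `B * C` has real trace of absolute value less than 2 iff `B` and `C`
are simultaneously conjugate into SU(2). -/
theorem trace_mul_real_abs_lt_two_iff_simultaneously_unitarizable
    (B C : Matrix.SpecialLinearGroup (Fin 2) ℂ)
    (hB : Matrix.trace (B : Matrix (Fin 2) (Fin 2) ℂ) = 0)
    (hC : Matrix.trace (C : Matrix (Fin 2) (Fin 2) ℂ) = 0)
    (hne : C ≠ B) (hne' : C ≠ -B) :
    (∃ r : ℝ, Matrix.trace ((B * C : Matrix.SpecialLinearGroup (Fin 2) ℂ) :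
        Matrix (Fin 2) (Fin 2) ℂ) = (r : ℂ) ∧ |r| < 2) ↔
    ∃ M : Matrix.SpecialLinearGroup (Fin 2) ℂ,
      ((M * B * M⁻¹ : Matrix.SpecialLinearGroup (Fin 2) ℂ) :
          Matrix (Fin 2) (Fin 2) ℂ) ∈ Matrix.unitaryGroup (Fin 2) ℂ ∧
      ((M * C * M⁻¹ : Matrix.SpecialLinearGroup (Fin 2) ℂ) :
          Matrix (Fin 2) (Fin 2) ℂ) ∈ Matrix.unitaryGroup (Fin 2) ℂ := by
  constructor
  · rintro ⟨r, htr, hr⟩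
    by_cases hp : B 0 0 + Complex.I = 0
    · -- Replacing `(B, C)` by `(-B, -C)` changes neither the trace of the product nor unitarity,
      -- and moves the corner entry `-i` to `i`.
      have hp' : (-B) 0 0 + Complex.I ≠ 0 := by
        have h1 : B 0 0 = -Complex.I := by linear_combination hp
        simp [h1]
      obtain ⟨M, h1, h2⟩ := exists_conj_unitary_of_ne (-B) (-C)
        (by rw [Matrix.SpecialLinearGroup.coe_neg, Matrix.trace_neg, hB, neg_zero])
        (by rw [Matrix.SpecialLinearGroup.coe_neg, Matrix.trace_neg, hC, neg_zero])
        hp' r (by rw [neg_mul_neg, htr]) hr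
      have key : ∀ A : SL2,
          ((M * -A * M⁻¹ : SL2) : Matrix (Fin 2) (Fin 2) ℂ) ∈ Matrix.unitaryGroup (Fin 2) ℂ →
          ((M * A * M⁻¹ : SL2) : Matrix (Fin 2) (Fin 2) ℂ) ∈ Matrix.unitaryGroup (Fin 2) ℂ := by
        intro A hA
        rw [mul_neg, neg_mul, Matrix.SpecialLinearGroup.coe_neg,
          Matrix.mem_unitaryGroup_iff, star_neg, neg_mul_neg] at hA
        exact Matrix.mem_unitaryGroup_iff.2 hA
      exact ⟨M, key B h1, key C h2⟩
    · exact exists_conj_unitary_of_ne B C hB hC hp r htr hr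
  · rintro ⟨M, h1, h2⟩
    obtain ⟨r, htr, hr⟩ := exists_trace_eq_of_mem_unitaryGroup _ _ h1 h2
      (by rw [trace_conj_coe, hB]) (by rw [trace_conj_coe, hC])
      (by simpa using hne)
      (by
        intro h
        apply hne'
        have h3 : M * C * M⁻¹ = M * (-B) * M⁻¹ := by rw [h, mul_neg, neg_mul]
        exact mul_left_cancel (mul_right_cancel h3))
    refine ⟨r, ?_, hr⟩
    rwa [conj_mul, trace_conj_coe] at htr
end

section
/- Let A₁, A₂ ∈ SL(2,ℂ) with A₁ ∉ {1, -1}, A₂ ∉ {1, -1}, such that tr A₁ and tr A₂ are real with |tr A₁| ≤ 2 and |tr A₂| ≤ 2, and such that A₁ and A₂ have no common eigenvector in ℂ². Then there exists B ∈ SL(2,ℂ) with tr B = 0, tr(A₁·B) = 0, and tr(A₂·B) = 0; equivalently, there exist trace-zero elements F₁, B, F₃ ∈ SL(2,ℂ) with A₁ = F₁·B and A₂ = B·F₃. -/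
/-!
The half-turn is the normalized commutator. Put `C = A₁ A₂ - A₂ A₁`; by cyclicity of the trace,
`tr C = tr (A₁ C) = tr (A₂ C) = 0`. So if `det C ≠ 0`, dividing `C` by a square root of `det C`
gives `B`, and the factors are `F₁ = A₁ B⁻¹`, `F₃ = B⁻¹ A₂`, where `B⁻¹ = -B` because `tr B = 0`.

If `det C = 0`, then `A₁` and `A₂` share an eigenvector, because a nonzero `2 × 2` matrix has kernel
of dimension at most one (`exists_eq_smul_of_mulVec_eq_zero`). For `C ≠ 0` the kernel of `C` is a
line, invariant under both matrices since `C Aᵢ = (tr Aᵢ) C - Aᵢ C`. For `C = 0` the matrices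
commute, so `A₂` preserves an eigenspace of `A₁`, which is a line since `A₁` is not scalar.
-/

open Matrix

/-- A nonzero `2 × 2` matrix has kernel of dimension at most one. -/
lemma exists_eq_smul_of_mulVec_eq_zero {M : Matrix (Fin 2) (Fin 2) ℂ} (hM : M ≠ 0)
    {v w : Fin 2 → ℂ} (hv : v ≠ 0) (hMv : M *ᵥ v = 0) (hMw : M *ᵥ w = 0) :
    ∃ t : ℂ, w = t • v := by
  have hv0 := congrFun hMv 0
  have hv1 := congrFun hMv 1
  have hw0 := congrFun hMw 0
  have hw1 := congrFun hMw 1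
  simp only [mulVec, dotProduct, Fin.sum_univ_two, Pi.zero_apply] at hv0 hv1 hw0 hw1
  -- Each entry of `M` annihilates the determinant of `v` and `w`, and some entry is nonzero.
  have hdet : v 0 * w 1 - v 1 * w 0 = 0 := by
    by_contra hne
    apply hM
    ext i j
    apply mul_right_cancel₀ hne
    fin_cases i <;> fin_cases j <;>
      simp only [Fin.zero_eta, Fin.mk_one, Matrix.zero_apply, zero_mul]
    · linear_combination w 1 * hv0 - v 1 * hw0
    · linear_combination v 0 * hw0 - w 0 * hv0
    · linear_combination w 1 * hv1 - v 1 * hw1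
    · linear_combination v 0 * hw1 - w 0 * hv1
  by_cases h0 : v 0 = 0
  · have h1 : v 1 ≠ 0 := by
      intro h1
      apply hv
      ext i
      fin_cases i <;> simp [h0, h1]
    refine ⟨w 1 / v 1, ?_⟩
    ext i
    fin_cases i <;> simp <;> field_simp
    linear_combination -hdet
  · refine ⟨w 0 / v 0, ?_⟩
    ext i
    fin_cases i <;> simp <;> field_simp
    linear_combination hdet

/-- The kernel of `C` is `A`-invariant when `C` and `A * C` have trace zero. -/
lemma mulVec_mulVec_eq_zero {A C : Matrix (Fin 2) (Fin 2) ℂ} (hC : C.trace = 0)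
    (hAC : (A * C).trace = 0) {v : Fin 2 → ℂ} (hv : C *ᵥ v = 0) : C *ᵥ (A *ᵥ v) = 0 := by
  -- This is the polarized Cayley-Hamilton identity.
  have key : C * A = A.trace • C - A * C := by
    rw [trace_fin_two] at hC hAC
    simp only [mul_apply, Fin.sum_univ_two] at hAC
    ext i j
    fin_cases i <;> fin_cases j <;>
      simp [mul_apply, Fin.sum_univ_two, trace_fin_two]
    · linear_combination hAC - A 1 1 * hC
    · linear_combination A 0 1 * hC
    · linear_combination A 1 0 * hC
    · linear_combination hAC - A 0 0 * hC
  rw [mulVec_mulVec, key, sub_mulVec, smul_mulVec, ← mulVec_mulVec, hv]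
  simp

lemma eq_one_or_eq_neg_one_of_coe_eq_smul {A : SpecialLinearGroup (Fin 2) ℂ} {μ : ℂ}
    (h : (A : Matrix (Fin 2) (Fin 2) ℂ) = μ • 1) : A = 1 ∨ A = -1 := by
  have hd := A.det_coe
  rw [h, det_smul, det_one, Fintype.card_fin, mul_one] at hd
  rcases sq_eq_one_iff.mp hd with rfl | rfl
  · left
    ext i j
    simp [h]
  · right
    ext i j
    simp [h]

/-- Two elements of `SL(2,ℂ)` with singular commutator have a common eigenvector; `A₁ ≠ ±1`
ensures that the eigenspaces of `A₁` are lines. -/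
lemma exists_common_eigenvector (A₁ A₂ : SpecialLinearGroup (Fin 2) ℂ)
    (h₁ : A₁ ≠ 1) (h₁' : A₁ ≠ -1)
    (hdet : ((A₁ : Matrix (Fin 2) (Fin 2) ℂ) * A₂ - A₂ * A₁).det = 0) :
    ∃ v : Fin 2 → ℂ, v ≠ 0 ∧
      (∃ μ : ℂ, mulVec (A₁ : Matrix (Fin 2) (Fin 2) ℂ) v = μ • v) ∧
      (∃ ν : ℂ, mulVec (A₂ : Matrix (Fin 2) (Fin 2) ℂ) v = ν • v) := by
  by_cases hC : (A₁ : Matrix (Fin 2) (Fin 2) ℂ) * A₂ - A₂ * A₁ = 0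
  · obtain ⟨μ, hμ⟩ := Module.End.exists_eigenvalue (toLin' (A₁ : Matrix (Fin 2) (Fin 2) ℂ))
    obtain ⟨v, hv⟩ := hμ.exists_hasEigenvector
    have hAv : (A₁ : Matrix (Fin 2) (Fin 2) ℂ) *ᵥ v = μ • v := by
      simpa using hv.apply_eq_smul
    refine ⟨v, hv.2, ⟨μ, hAv⟩, ?_⟩
    apply exists_eq_smul_of_mulVec_eq_zero
      (M := (A₁ : Matrix (Fin 2) (Fin 2) ℂ) - μ • 1) _ hv.2
    · rw [sub_mulVec, hAv, smul_mulVec, one_mulVec, sub_self]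
    · rw [sub_mulVec, mulVec_mulVec, sub_eq_zero.mp hC, ← mulVec_mulVec, hAv, mulVec_smul,
        smul_mulVec, one_mulVec, sub_self]
    · intro h
      exact (eq_one_or_eq_neg_one_of_coe_eq_smul (sub_eq_zero.mp h)).elim h₁ h₁'
  · obtain ⟨v, hv, hCv⟩ := exists_mulVec_eq_zero_iff.mpr hdet
    have htr : ((A₁ : Matrix (Fin 2) (Fin 2) ℂ) * A₂ - A₂ * A₁).trace = 0 := by
      rw [trace_sub, trace_mul_comm, sub_self]
    refine ⟨v, hv, exists_eq_smul_of_mulVec_eq_zero hC hv hCv (mulVec_mulVec_eq_zero htr ?_ hCv),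
      exists_eq_smul_of_mulVec_eq_zero hC hv hCv (mulVec_mulVec_eq_zero htr ?_ hCv)⟩
    · simp only [trace_fin_two, mul_apply, Fin.sum_univ_two, Matrix.sub_apply]
      ring
    · simp only [trace_fin_two, mul_apply, Fin.sum_univ_two, Matrix.sub_apply]
      ring

/-- Two elliptic or parabolic elements of SL(2,ℂ) (nontrivial, real trace of
absolute value at most 2) without a common eigenvector admit half-turn
factorizations with a common middle half-turn: there is a trace-zero `B` with
`tr(A₁·B) = tr(A₂·B) = 0`, equivalently `A₁ = F₁·B` and `A₂ = B·F₃` with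
`F₁, B, F₃` all of trace zero. -/
theorem exists_common_half_turn_factor
    (A₁ A₂ : Matrix.SpecialLinearGroup (Fin 2) ℂ)
    (h₁ : A₁ ≠ 1) (h₁' : A₁ ≠ -1) (h₂ : A₂ ≠ 1) (h₂' : A₂ ≠ -1)
    (htr₁ : ∃ r : ℝ, Matrix.trace (A₁ : Matrix (Fin 2) (Fin 2) ℂ) = (r : ℂ) ∧ |r| ≤ 2)
    (htr₂ : ∃ r : ℝ, Matrix.trace (A₂ : Matrix (Fin 2) (Fin 2) ℂ) = (r : ℂ) ∧ |r| ≤ 2)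
    (hnocommon : ¬ ∃ v : Fin 2 → ℂ, v ≠ 0 ∧
      (∃ μ : ℂ, Matrix.mulVec (A₁ : Matrix (Fin 2) (Fin 2) ℂ) v = μ • v) ∧
      (∃ ν : ℂ, Matrix.mulVec (A₂ : Matrix (Fin 2) (Fin 2) ℂ) v = ν • v)) :
    ∃ B : Matrix.SpecialLinearGroup (Fin 2) ℂ,
      Matrix.trace (B : Matrix (Fin 2) (Fin 2) ℂ) = 0 ∧
      Matrix.trace ((A₁ * B : Matrix.SpecialLinearGroup (Fin 2) ℂ) :
        Matrix (Fin 2) (Fin 2) ℂ) = 0 ∧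
      Matrix.trace ((A₂ * B : Matrix.SpecialLinearGroup (Fin 2) ℂ) :
        Matrix (Fin 2) (Fin 2) ℂ) = 0 ∧
      ∃ F₁ F₃ : Matrix.SpecialLinearGroup (Fin 2) ℂ,
        Matrix.trace (F₁ : Matrix (Fin 2) (Fin 2) ℂ) = 0 ∧
        Matrix.trace (F₃ : Matrix (Fin 2) (Fin 2) ℂ) = 0 ∧
        A₁ = F₁ * B ∧ A₂ = B * F₃ := by
  have hdet : ((A₁ : Matrix (Fin 2) (Fin 2) ℂ) * A₂ - A₂ * A₁).det ≠ 0 :=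
    fun h => hnocommon (exists_common_eigenvector A₁ A₂ h₁ h₁' h)
  obtain ⟨s, hs⟩ := IsAlgClosed.exists_pow_nat_eq
    ((A₁ : Matrix (Fin 2) (Fin 2) ℂ) * A₂ - A₂ * A₁).det (n := 2) (by norm_num)
  have hs0 : s ≠ 0 := by
    rintro rfl
    exact hdet (by simpa using hs.symm)
  obtain ⟨B, hB⟩ : ∃ B : SpecialLinearGroup (Fin 2) ℂ, (B : Matrix (Fin 2) (Fin 2) ℂ) =
      s⁻¹ • ((A₁ : Matrix (Fin 2) (Fin 2) ℂ) * A₂ - A₂ * A₁) :=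
    ⟨⟨_, by rw [det_smul, Fintype.card_fin, ← hs]; field_simp⟩, rfl⟩
  have t0 : (B : Matrix (Fin 2) (Fin 2) ℂ).trace = 0 := by
    rw [hB, trace_smul, trace_sub, trace_mul_comm, sub_self, smul_zero]
  have t1 : ((A₁ : Matrix (Fin 2) (Fin 2) ℂ) * B).trace = 0 := by
    rw [hB]
    simp only [trace_fin_two, mul_apply, Fin.sum_univ_two, Matrix.sub_apply, Matrix.smul_apply, smul_eq_mul]
    ring
  have t2 : ((A₂ : Matrix (Fin 2) (Fin 2) ℂ) * B).trace = 0 := by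
    rw [hB]
    simp only [trace_fin_two, mul_apply, Fin.sum_univ_two, Matrix.sub_apply, Matrix.smul_apply, smul_eq_mul]
    ring
  have hinv : ((B⁻¹ : SpecialLinearGroup (Fin 2) ℂ) : Matrix (Fin 2) (Fin 2) ℂ) =
      -(B : Matrix (Fin 2) (Fin 2) ℂ) := by
    rw [trace_fin_two] at t0
    rw [Matrix.SpecialLinearGroup.coe_inv, adjugate_fin_two]
    ext i j
    fin_cases i <;> fin_cases j <;> simp
    · linear_combination t0
    · linear_combination t0
  refine ⟨B, t0, t1, t2,
    A₁ * B⁻¹, B⁻¹ * A₂, ?_, ?_, by group, by group⟩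
  · rw [Matrix.SpecialLinearGroup.coe_mul, hinv, mul_neg, trace_neg, t1, neg_zero]
  · rw [Matrix.SpecialLinearGroup.coe_mul, hinv, neg_mul, trace_neg, trace_mul_comm, t2, neg_zero]
end

section
/- Let G be a subgroup of SL(2,ℂ) such that tr g is real for every g ∈ G, and such that the elements of G have no common eigenvector (i.e. there is no one-dimensional subspace of ℂ² invariant under every element of G). Then there exists M ∈ GL(2,ℂ) such that either M·g·M⁻¹ has all real entries for every g ∈ G, or M·g·M⁻¹ is unitary for every g ∈ G. In other words, G is conjugate into SL(2,ℝ) or into SU(2). -/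
/-!
The argument splits on whether some `g ∈ G` has two distinct eigenvalues.

If every trace is `±2`, pick `g ≠ ±1` in `G`; then `ε g = 1 + N` with `ε = ±1`, `N ≠ 0` and
`N² = 0`. For `h ∈ G` the numbers `tr (h gⁿ) = εⁿ (tr h + n tr (h N))`, `n = 0, 1, 2`, all lie
in `{2, -2}`, which forces `tr (h N) = 0`; this says that `h` preserves the line `im N`, so `G` has
a common eigenvector (`exists_trace_sq_ne_four`).

Otherwise conjugate `G` so that it contains a diagonal matrix `g = diag(l, m)` with `l m = 1`,
`l ≠ m`. As `l + m` is real, either `l, m` are real or `m = conj l`. The traces of `h`, `g h`,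
`h h'` and `h g h'` being real, linear algebra shows in the first case that the diagonal entries of
`h` and the products `h₀₁ h'₁₀` are real, so that a diagonal conjugation makes `G` real
(`conjugate_of_diagonal_real`). In the second case every `h` has the form `[a, b; k conj b, conj a]`
with one real `k ≠ 0` for all of `G`; if `k < 0` a diagonal conjugation makes `G` unitary, and if
`k > 0` it lands in `SU(1,1)`, which a Cayley transform carries to `SL(2,ℝ)`
(`conjugate_of_diagonal_conj`).
-/

open Matrix

namespace RealTrace

/-- Complex `2 × 2` matrices. -/
abbrev M2 := Matrix (Fin 2) (Fin 2) ℂ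

/-- The determinant of two vectors of `ℂ²`; it vanishes exactly when they are parallel. -/
def cross (u w : Fin 2 → ℂ) : ℂ := u 0 * w 1 - u 1 * w 0

lemma cross_mulVec (P : M2) (u w : Fin 2 → ℂ) :
    cross (P *ᵥ u) (P *ᵥ w) = P.det * cross u w := by
  simp only [cross, det_fin_two, mulVec, dotProduct, Fin.sum_univ_two]
  ring

lemma exists_eigen_of_cross_eq_zero {v w : Fin 2 → ℂ} (hv : v ≠ 0) (h : cross v w = 0) :
    ∃ c : ℂ, w = c • v := by
  simp only [cross] at h
  by_cases h0 : v 0 = 0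
  · have h1 : v 1 ≠ 0 := fun h1 => hv (by ext i; fin_cases i <;> simp [h0, h1])
    have hw : w 0 = 0 := by simpa [h0, h1] using h
    refine ⟨w 1 / v 1, ?_⟩
    ext i; fin_cases i <;> simp [h0, h1, hw]
  · refine ⟨w 0 / v 0, ?_⟩
    ext i; fin_cases i
    · simp [h0]
    · simp only [Pi.smul_apply, smul_eq_mul, Fin.mk_one]
      field_simp
      linear_combination h

/-- A multiplicatively closed set of matrices of determinant one with real traces and no common
eigenvector. -/
structure Admissible (S : Set M2) : Prop where
  mul : ∀ g ∈ S, ∀ h ∈ S, g * h ∈ S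
  det : ∀ g ∈ S, g.det = 1
  tr : ∀ g ∈ S, g.trace.im = 0
  irr : ∀ v : Fin 2 → ℂ, v ≠ 0 → ∃ g ∈ S, cross v (g *ᵥ v) ≠ 0

/-- Some matrix `M`, with inverse `N`, conjugates all of `S` to real matrices or all of `S` to
unitary matrices. -/
def Conjugable (S : Set M2) : Prop :=
  ∃ M N : M2, M * N = 1 ∧
    ((∀ g ∈ S, ∀ i j, ((M * g * N) i j).im = 0) ∨ (∀ g ∈ S, M * g * N ∈ unitaryGroup (Fin 2) ℂ))

lemma Admissible.conj {S : Set M2} (hS : Admissible S) {P Q : M2} (hPQ : P * Q = 1) :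
    Admissible ((fun g => Q * g * P) '' S) := by
  have hQP : Q * P = 1 := mul_eq_one_comm.mp hPQ
  have hd : P.det * Q.det = 1 := by rw [← det_mul, hPQ, det_one]
  refine ⟨?_, ?_, ?_, ?_⟩
  · rintro _ ⟨g, hg, rfl⟩ _ ⟨h, hh, rfl⟩
    refine ⟨g * h, hS.mul g hg h hh, ?_⟩
    calc Q * (g * h) * P = Q * g * 1 * h * P := by simp only [mul_one, mul_assoc]
      _ = Q * g * P * (Q * h * P) := by rw [← hPQ]; simp only [mul_assoc]
  · rintro _ ⟨g, hg, rfl⟩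
    simp only [det_mul, hS.det g hg]
    linear_combination hd
  · rintro _ ⟨g, hg, rfl⟩
    have : (Q * g * P).trace = g.trace := by
      rw [trace_mul_comm, ← mul_assoc, hPQ, one_mul]
    simpa only [this] using hS.tr g hg
  · intro v hv
    have hPv : P *ᵥ v ≠ 0 := by
      intro h
      apply hv
      rw [← one_mulVec v, ← hQP, ← mulVec_mulVec, h, mulVec_zero]
    obtain ⟨g, hg, hc⟩ := hS.irr _ hPv
    refine ⟨_, ⟨g, hg, rfl⟩, fun h0 => hc ?_⟩
    have : g *ᵥ (P *ᵥ v) = P *ᵥ ((Q * g * P) *ᵥ v) := by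
      rw [mulVec_mulVec, mulVec_mulVec, ← mul_assoc, ← mul_assoc, hPQ, one_mul]
    rw [this, cross_mulVec]
    simp only [h0, mul_zero]

lemma Conjugable.of_conj {S : Set M2} {P Q : M2} (hPQ : P * Q = 1)
    (h : Conjugable ((fun g => Q * g * P) '' S)) : Conjugable S := by
  obtain ⟨M, N, hMN, h⟩ := h
  have e : ∀ g : M2, M * Q * g * (P * N) = M * (Q * g * P) * N := fun g => by
    simp only [mul_assoc]
  refine ⟨M * Q, P * N, ?_, ?_⟩
  · calc M * Q * (P * N) = M * (Q * P) * N := by simp only [mul_assoc]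
      _ = 1 := by rw [mul_eq_one_comm.mp hPQ, mul_one, hMN]
  · rcases h with h | h
    · left
      intro g hg i j
      rw [e]
      exact h _ ⟨g, hg, rfl⟩ i j
    · right
      intro g hg
      rw [e]
      exact h _ ⟨g, hg, rfl⟩

/-- Since `S` has no common eigenvector, its traces cannot all be `±2`. -/
lemma exists_trace_sq_ne_four {S : Set M2} (hS : Admissible S) :
    ∃ g ∈ S, g.trace ^ 2 ≠ 4 := by
  by_contra! hall
  have hpm : ∀ g ∈ S, g.trace = 2 ∨ g.trace = -2 := by
    intro g hg
    have : (g.trace - 2) * (g.trace + 2) = 0 := by linear_combination hall g hg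
    rcases mul_eq_zero.mp this with h | h
    · left; linear_combination h
    · right; linear_combination h
  -- A non-scalar element of `S`: a scalar one has every vector as an eigenvector.
  obtain ⟨g, hg, hns⟩ : ∃ g ∈ S, ¬ (g 0 1 = 0 ∧ g 1 0 = 0 ∧ g 0 0 = g 1 1) := by
    by_contra! hsc
    obtain ⟨g, hg, hc⟩ := hS.irr ![1, 1] (fun h => by simpa using congrFun h 0)
    obtain ⟨h1, h2, h3⟩ : g 0 1 = 0 ∧ g 1 0 = 0 ∧ g 0 0 = g 1 1 := hsc g hg
    apply hc
    simp [cross, mulVec, dotProduct, Fin.sum_univ_two, h1, h2, h3]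
  obtain ⟨e, he, htg⟩ : ∃ e : ℂ, e ^ 2 = 1 ∧ g.trace = 2 * e := by
    rcases hpm g hg with h | h
    · exact ⟨1, by norm_num, by rw [h]; norm_num⟩
    · exact ⟨-1, by norm_num, by rw [h]; norm_num⟩
  have hdet := hS.det g hg
  rw [det_fin_two] at hdet
  rw [trace_fin_two] at htg
  -- `p, q, r, -p` are the entries of `g - e`, which squares to zero.
  obtain ⟨p, hp⟩ : ∃ p, p = g 0 0 - e := ⟨_, rfl⟩
  have hp1 : g 1 1 = e - p := by rw [hp]; linear_combination htg
  have hp0 : g 0 0 = e + p := by rw [hp]; ring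
  obtain ⟨q, hq⟩ : ∃ q, q = g 0 1 := ⟨_, rfl⟩
  obtain ⟨r, hr⟩ : ∃ r, r = g 1 0 := ⟨_, rfl⟩
  rw [hp0, hp1, ← hq, ← hr] at hdet
  have hnil : p ^ 2 + q * r = 0 := by linear_combination he - hdet
  rw [hp0, hp1, ← hq, ← hr] at hns
  have key : ∀ h ∈ S, (h 0 0 - h 1 1) * p + h 0 1 * r + h 1 0 * q = 0 := by
    intro h hh
    have t0 := hpm h hh
    have t1 := hpm _ (hS.mul h hh g hg)
    have t2 := hpm _ (hS.mul _ (hS.mul h hh g hg) g hg)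
    simp only [trace_fin_two, mul_apply, Fin.sum_univ_two, hp0, hp1, ← hq, ← hr] at t0 t1 t2
    obtain ⟨z, hz⟩ : ∃ z, z = (h 0 0 - h 1 1) * p + h 0 1 * r + h 1 0 * q := ⟨_, rfl⟩
    rw [← hz]
    obtain ⟨s, hs⟩ : ∃ s, s = h 0 0 + h 1 1 := ⟨_, rfl⟩
    have T0 : s ^ 2 = 4 := by rw [hs]; rcases t0 with t | t <;> rw [t] <;> norm_num
    have T1 : (e * s + z) ^ 2 = 4 := by
      have : e * s + z = h 0 0 * (e + p) + h 0 1 * r + (h 1 0 * q + h 1 1 * (e - p)) := by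
        rw [hs, hz]; ring
      rw [this]; rcases t1 with t | t <;> rw [t] <;> norm_num
    have T2 : (s + 2 * e * z) ^ 2 = 4 := by
      have : s + 2 * e * z = (h 0 0 * (e + p) + h 0 1 * r) * (e + p) +
          (h 0 0 * q + h 0 1 * (e - p)) * r +
          ((h 1 0 * (e + p) + h 1 1 * r) * q + (h 1 0 * q + h 1 1 * (e - p)) * (e - p)) := by
        rw [hs, hz]
        linear_combination (-(h 0 0 + h 1 1)) * he - (h 0 0 + h 1 1) * hnil
      rw [this]; rcases t2 with t | t <;> rw [t] <;> norm_num
    -- The three squares give `2 e s z + z² = 0` and `4 e s z + 4 z² = 0`.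
    have hz2 : z ^ 2 = 0 := by
      linear_combination (1 / 2 : ℂ) * T2 - T1 + (e ^ 2 - 1 / 2) * T0 +
        (4 - 2 * z ^ 2) * he
    exact pow_eq_zero_iff (two_ne_zero) |>.mp hz2
  -- Either nonzero column of `g - e` spans an invariant line.
  by_cases hv : (![p, r] : Fin 2 → ℂ) = 0
  · have hp' : p = 0 := by simpa using congrFun hv 0
    have hr' : r = 0 := by simpa using congrFun hv 1
    have hw : (![q, -p] : Fin 2 → ℂ) ≠ 0 := by
      intro h
      have hq' : q = 0 := by simpa using congrFun h 0
      exact hns ⟨hq', hr', by rw [hp']; ring⟩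
    obtain ⟨h, hh, hc⟩ := hS.irr _ hw
    apply hc
    simp only [cross, mulVec, dotProduct, Fin.sum_univ_two, cons_val_zero, cons_val_one]
    linear_combination q * key h hh - h 0 1 * hnil
  · obtain ⟨h, hh, hc⟩ := hS.irr _ hv
    apply hc
    simp only [cross, mulVec, dotProduct, Fin.sum_univ_two, cons_val_zero, cons_val_one]
    linear_combination (-r) * key h hh + h 1 0 * hnil

/-- A matrix of determinant one with trace different from `±2` is diagonalizable with distinct
eigenvalues. -/
lemma exists_diagonalization (g : M2) (hdet : g.det = 1) (htr : g.trace ^ 2 ≠ 4) :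
    ∃ (P Q : M2) (l m : ℂ), P * Q = 1 ∧ l * m = 1 ∧ l ≠ m ∧ Q * g * P = !![l, 0; 0, m] := by
  obtain ⟨s, hs⟩ := IsAlgClosed.exists_pow_nat_eq (g.trace ^ 2 - 4) (n := 2) two_pos
  obtain ⟨l, hl⟩ : ∃ l, l = (g.trace + s) / 2 := ⟨_, rfl⟩
  obtain ⟨m, hm⟩ : ∃ m, m = (g.trace - s) / 2 := ⟨_, rfl⟩
  have hlm : l * m = 1 := by rw [hl, hm]; linear_combination (-1 / 4 : ℂ) * hs
  have hsum : l + m = g.trace := by rw [hl, hm]; ring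
  have hne : l ≠ m := by
    intro h
    have hs0 : s = 0 := by linear_combination h - hl + hm
    apply htr
    rw [hs0] at hs
    linear_combination -hs
  rw [det_fin_two] at hdet
  rw [trace_fin_two] at hsum
  have eig : ∀ x : ℂ, x ^ 2 - (l + m) * x + 1 = 0 →
      ∃ v : Fin 2 → ℂ, v ≠ 0 ∧ g *ᵥ v = x • v := by
    intro x hx
    obtain ⟨v, hv, h⟩ := exists_mulVec_eq_zero_iff.mpr (show (g - x • (1 : M2)).det = 0 by
      simp [det_fin_two]
      linear_combination hx + x * hsum + hdet)
    exact ⟨v, hv, by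
      rwa [sub_mulVec, smul_mulVec, one_mulVec, sub_eq_zero] at h⟩
  obtain ⟨v, hv, hgv⟩ := eig l (by linear_combination -hlm)
  obtain ⟨w, hw, hgw⟩ := eig m (by linear_combination -hlm)
  have v0 := congrFun hgv 0
  have v1 := congrFun hgv 1
  have w0 := congrFun hgw 0
  have w1 := congrFun hgw 1
  simp only [mulVec, dotProduct, Fin.sum_univ_two, Pi.smul_apply, smul_eq_mul] at v0 v1 w0 w1
  -- `v` and `w` belong to distinct eigenvalues, so they are independent.
  have hcross : v 0 * w 1 - w 0 * v 1 ≠ 0 := by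
    intro h
    obtain ⟨c, rfl⟩ := exists_eigen_of_cross_eq_zero hv (w := w) (by
      rw [cross]; linear_combination h)
    rw [mulVec_smul, hgv, smul_comm m c v, ← sub_eq_zero, ← smul_sub, ← sub_smul, smul_smul,
      smul_eq_zero_iff_left hv] at hgw
    rcases mul_eq_zero.mp hgw with h0 | h0
    · exact hw (by rw [h0, zero_smul])
    · exact hne (sub_eq_zero.mp h0)
  obtain ⟨P, hP⟩ : ∃ P : M2, P = !![v 0, w 0; v 1, w 1] := ⟨_, rfl⟩
  have hPdet : IsUnit P.det := by
    rw [hP, det_fin_two_of]; exact IsUnit.mk0 _ hcross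
  refine ⟨P, P⁻¹, l, m, mul_nonsing_inv P hPdet, hlm, hne, ?_⟩
  have hgP : g * P = P * !![l, 0; 0, m] := by
    rw [hP]
    ext i j
    fin_cases i <;> fin_cases j <;> simp [mul_apply, Fin.sum_univ_two]
    · linear_combination v0
    · linear_combination w0
    · linear_combination v1
    · linear_combination w1
  rw [mul_assoc, hgP, ← mul_assoc, nonsing_inv_mul P hPdet, one_mul]

/-- Two complex numbers with real sum are real if another combination with distinct real
coefficients is also real. -/
lemma im_eq_zero_of_real_combination {l m X Y : ℂ} (hl : l.im = 0) (hm : m.im = 0) (hlm : l ≠ m)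
    (h1 : (X + Y).im = 0) (h2 : (l * X + m * Y).im = 0) : X.im = 0 ∧ Y.im = 0 := by
  have hne : l.re - m.re ≠ 0 := fun h => hlm (Complex.ext (by linarith) (by rw [hl, hm]))
  simp only [Complex.add_im, Complex.mul_im, hl, hm, zero_mul, add_zero] at h1 h2
  have hX : (l.re - m.re) * X.im = 0 := by linear_combination h2 - m.re * h1
  have hX' := (mul_eq_zero.mp hX).resolve_left hne
  exact ⟨hX', by linarith⟩

/-- Two complex numbers with real sum are conjugate if another combination with distinct conjugate
coefficients is also real. -/
lemma eq_conj_of_real_combination {l X Y : ℂ} (hl : l.im ≠ 0)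
    (h1 : (X + Y).im = 0) (h2 : (l * X + star l * Y).im = 0) : Y = star X := by
  simp only [Complex.add_im, Complex.mul_im, Complex.star_def, Complex.conj_re,
    Complex.conj_im] at h1 h2
  have hX : l.im * (X.re - Y.re) = 0 := by linear_combination h2 - l.re * h1
  have hX' := (mul_eq_zero.mp hX).resolve_left hl
  apply Complex.ext
  · simp only [Complex.star_def, Complex.conj_re]; linarith
  · simp only [Complex.star_def, Complex.conj_im]; linarith

lemma Admissible.exists_upper {S : Set M2} (hS : Admissible S) : ∃ h ∈ S, h 0 1 ≠ 0 := by
  obtain ⟨h, hh, hc⟩ := hS.irr ![0, 1] (fun h => by simpa using congrFun h 1)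
  exact ⟨h, hh, by simpa [cross, mulVec, dotProduct, Fin.sum_univ_two] using hc⟩

lemma Admissible.exists_lower {S : Set M2} (hS : Admissible S) : ∃ h ∈ S, h 1 0 ≠ 0 := by
  obtain ⟨h, hh, hc⟩ := hS.irr ![1, 0] (fun h => by simpa using congrFun h 0)
  exact ⟨h, hh, by simpa [cross, mulVec, dotProduct, Fin.sum_univ_two] using hc⟩

/-- The real traces provided by a diagonal element of `S`. -/
lemma Admissible.traces {S : Set M2} (hS : Admissible S) {l m : ℂ} (hg : !![l, 0; 0, m] ∈ S) :
    (∀ h ∈ S, (h 0 0 + h 1 1).im = 0 ∧ (l * h 0 0 + m * h 1 1).im = 0) ∧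
    (∀ h ∈ S, ∀ k ∈ S,
      (h 0 0 * k 0 0 + h 1 1 * k 1 1 + (h 1 0 * k 0 1 + h 0 1 * k 1 0)).im = 0 ∧
      (l * (h 0 0 * k 0 0) + m * (h 1 1 * k 1 1) +
        (l * (h 1 0 * k 0 1) + m * (h 0 1 * k 1 0))).im = 0) := by
  refine ⟨fun h hh => ⟨?_, ?_⟩, fun h hh k hk => ⟨?_, ?_⟩⟩
  · simpa only [trace_fin_two] using hS.tr h hh
  · have := hS.tr _ (hS.mul _ hg h hh)
    convert this using 2
    rw [trace_fin_two, mul_apply, mul_apply]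
    simp
  · have := hS.tr _ (hS.mul _ hh k hk)
    convert this using 2
    simp only [trace_fin_two, mul_apply, Fin.sum_univ_two]
    ring
  · have := hS.tr _ (hS.mul _ (hS.mul h hh _ hg) k hk)
    convert this using 2
    simp [trace_fin_two, mul_apply, Fin.sum_univ_two]
    ring

lemma conjugate_of_diagonal_real {S : Set M2} (hS : Admissible S) {l m : ℂ}
    (hg : !![l, 0; 0, m] ∈ S) (hl : l.im = 0) (hm : m.im = 0) (hlm : l ≠ m) :
    Conjugable S := by
  obtain ⟨tr1, tr2⟩ := hS.traces hg
  have hdiag : ∀ h ∈ S, (h 0 0).im = 0 ∧ (h 1 1).im = 0 := fun h hh =>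
    im_eq_zero_of_real_combination hl hm hlm (tr1 h hh).1 (tr1 h hh).2
  have hoff : ∀ h ∈ S, ∀ k ∈ S, (h 0 1 * k 1 0).im = 0 := by
    intro h hh k hk
    obtain ⟨t1, t2⟩ := tr2 h hh k hk
    obtain ⟨a, d⟩ := hdiag h hh
    obtain ⟨a', d'⟩ := hdiag k hk
    refine (im_eq_zero_of_real_combination hl hm hlm (X := h 1 0 * k 0 1) ?_ ?_).2
    · rw [Complex.add_im] at t1
      simpa [Complex.mul_im, a, d, a', d'] using t1
    · rw [Complex.add_im] at t2
      simpa [Complex.mul_im, a, d, a', d', hl, hm] using t2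
  obtain ⟨u, hu, hb⟩ := hS.exists_upper
  obtain ⟨w, hw, hc⟩ := hS.exists_lower
  refine ⟨!![1, 0; 0, u 0 1], !![1, 0; 0, (u 0 1)⁻¹], ?_, Or.inl ?_⟩
  · ext i j; fin_cases i <;> fin_cases j <;> simp [hb]
  · intro h hh i j
    have hbb : h 0 1 * (u 0 1)⁻¹ = (h 0 1 * w 1 0) / (u 0 1 * w 1 0) := by
      field_simp
    have him : (h 0 1 * (u 0 1)⁻¹).im = 0 := by
      rw [hbb, Complex.div_im, hoff h hh w hw, hoff u hu w hw]; simp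
    have hdd : u 0 1 * h 1 1 * (u 0 1)⁻¹ = h 1 1 := by field_simp
    fin_cases i <;> fin_cases j <;>
      simp only [mul_apply, Fin.sum_univ_two, of_apply, cons_val', cons_val_zero, cons_val_one,
        cons_val_fin_one, Fin.zero_eta, Fin.mk_one, one_mul, zero_mul, mul_zero, add_zero,
        zero_add, mul_one]
    · exact (hdiag h hh).1
    · exact him
    · exact hoff u hu h hh
    · rw [hdd]; exact (hdiag h hh).2

lemma conjugate_of_diagonal_conj {S : Set M2} (hS : Admissible S) {l : ℂ}
    (hg : !![l, 0; 0, star l] ∈ S) (hl : l.im ≠ 0) : Conjugable S := by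
  obtain ⟨tr1, tr2⟩ := hS.traces hg
  have hdiag : ∀ h ∈ S, h 1 1 = star (h 0 0) := fun h hh =>
    eq_conj_of_real_combination hl (tr1 h hh).1 (tr1 h hh).2
  have hoff : ∀ h ∈ S, ∀ k ∈ S, h 0 1 * k 1 0 = star (h 1 0 * k 0 1) := by
    intro h hh k hk
    obtain ⟨t1, t2⟩ := tr2 h hh k hk
    rw [hdiag h hh, hdiag k hk] at t1 t2
    refine eq_conj_of_real_combination hl ?_ ?_
    · rw [Complex.add_im] at t1
      simp only [Complex.add_im, Complex.mul_im, Complex.star_def, Complex.conj_re,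
        Complex.conj_im] at t1 ⊢
      linear_combination t1
    · rw [Complex.add_im] at t2
      simp only [Complex.add_im, Complex.mul_im, Complex.mul_re, Complex.star_def,
        Complex.conj_re, Complex.conj_im] at t2 ⊢
      linear_combination t2
  obtain ⟨u, hu, hb⟩ := hS.exists_upper
  obtain ⟨w, hw, hc⟩ := hS.exists_lower
  obtain ⟨κ, hκ⟩ : ∃ κ : ℂ, κ = star (u 1 0) / u 0 1 := ⟨_, rfl⟩
  have hlow : ∀ h ∈ S, h 1 0 = κ * star (h 0 1) := by
    intro h hh
    have := hoff u hu h hh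
    rw [star_mul'] at this
    rw [hκ, div_mul_eq_mul_div, ← this]
    field_simp
  have hκ0 : κ ≠ 0 := by
    rintro rfl
    exact hc (by rw [hlow w hw, zero_mul])
  have hκr : star κ = κ := by
    have h1 := hoff u hu u hu
    rw [hlow u hu] at h1
    simp only [star_mul', star_star] at h1
    have hb' : star (u 0 1) ≠ 0 := star_ne_zero.mpr hb
    have h2 : (star κ - κ) * (u 0 1 * star (u 0 1)) = 0 := by linear_combination -h1
    exact sub_eq_zero.mp ((mul_eq_zero.mp h2).resolve_right (mul_ne_zero hb hb'))
  obtain ⟨k, rfl⟩ : ∃ k : ℝ, κ = (k : ℂ) :=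
    ⟨κ.re, (Complex.conj_eq_iff_re.mp hκr).symm⟩
  have hk0 : k ≠ 0 := by simpa using hκ0
  have hdet : ∀ h ∈ S, h 0 0 * star (h 0 0) - k * (h 0 1 * star (h 0 1)) = 1 := by
    intro h hh
    have := hS.det h hh
    rw [det_fin_two, hdiag h hh, hlow h hh] at this
    linear_combination this
  rcases lt_or_gt_of_ne hk0 with hneg | hpos
  · -- `diag(t, 1)` with `t² = -k` conjugates `S` into `SU(2)`.
    obtain ⟨t, ht0, ht⟩ : ∃ t : ℝ, t ≠ 0 ∧ k = -t ^ 2 :=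
      ⟨√(-k), (Real.sqrt_pos.mpr (by linarith)).ne', by
        rw [Real.sq_sqrt (by linarith)]; ring⟩
    have htc : (t : ℂ) ≠ 0 := by exact_mod_cast ht0
    refine ⟨!![(t : ℂ), 0; 0, 1], !![(t : ℂ)⁻¹, 0; 0, 1], ?_, Or.inr ?_⟩
    · ext i j; fin_cases i <;> fin_cases j <;> simp [htc]
    · intro h hh
      have hd := hdet h hh
      rw [ht] at hd
      push_cast at hd
      have e : !![(t : ℂ), 0; 0, 1] * h * !![(t : ℂ)⁻¹, 0; 0, 1] =
          !![h 0 0, t * h 0 1; -t * star (h 0 1), star (h 0 0)] := by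
        rw [eta_fin_two h, hdiag h hh, hlow h hh, ht]
        ext i j
        fin_cases i <;> fin_cases j <;> simp <;> field_simp
      rw [e, mem_unitaryGroup_iff]
      simp only [Complex.star_def] at hd
      ext i j
      fin_cases i <;> fin_cases j <;>
        simp [mul_apply, Fin.sum_univ_two, star_apply] <;> first | ring1 | linear_combination hd
  · -- `diag(t, 1)` with `t² = k` conjugates `S` into `SU(1,1)`; the Cayley transform follows.
    obtain ⟨t, ht0, ht⟩ : ∃ t : ℝ, t ≠ 0 ∧ k = t ^ 2 :=
      ⟨√k, (Real.sqrt_pos.mpr hpos).ne', by rw [Real.sq_sqrt hpos.le]⟩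
    have htc : (t : ℂ) ≠ 0 := by exact_mod_cast ht0
    refine ⟨!![(t : ℂ), 1; -Complex.I * t, Complex.I],
      !![(2 * t : ℂ)⁻¹, Complex.I * (2 * t : ℂ)⁻¹; 2⁻¹, -Complex.I * 2⁻¹], ?_, Or.inl ?_⟩
    · ext i j
      fin_cases i <;> fin_cases j <;> simp [mul_apply, Fin.sum_univ_two] <;> field_simp <;>
        norm_num
    · intro h hh i j
      obtain ⟨a, ha⟩ : ∃ a, h 0 0 = a := ⟨_, rfl⟩
      obtain ⟨b, hb⟩ : ∃ b, h 0 1 = b := ⟨_, rfl⟩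
      have e : !![(t : ℂ), 1; -Complex.I * t, Complex.I] * h *
          !![(2 * t : ℂ)⁻¹, Complex.I * (2 * t : ℂ)⁻¹; 2⁻¹, -Complex.I * 2⁻¹] =
          !![((a.re + t * b.re : ℝ) : ℂ), ((-a.im + t * b.im : ℝ) : ℂ);
             ((a.im + t * b.im : ℝ) : ℂ), ((a.re - t * b.re : ℝ) : ℂ)] := by
        rw [eta_fin_two h, hdiag h hh, hlow h hh, ht, ha, hb]
        obtain ⟨x, y⟩ := a
        obtain ⟨z, w⟩ := b
        simp only [Complex.star_def, Complex.mk_eq_add_mul_I, map_add, map_mul,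
          Complex.conj_ofReal, Complex.conj_I]
        ext i j
        fin_cases i <;> fin_cases j <;> simp <;> field_simp <;> ring_nf <;> simp <;> ring
      rw [e]
      fin_cases i <;> fin_cases j <;> exact Complex.ofReal_im _

lemma Admissible.conjugable {S : Set M2} (hS : Admissible S) : Conjugable S := by
  obtain ⟨g, hg, hne⟩ := exists_trace_sq_ne_four hS
  obtain ⟨P, Q, l, m, hPQ, hlm, hne, hD⟩ := exists_diagonalization g (hS.det g hg) hne
  apply Conjugable.of_conj hPQ
  have hS' := hS.conj hPQ
  have hg' : !![l, 0; 0, m] ∈ (fun g => Q * g * P) '' S := ⟨g, hg, hD⟩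
  have htr : (l + m).im = 0 := by simpa [trace_fin_two] using hS'.tr _ hg'
  by_cases hl : l.im = 0
  · have hm : m.im = 0 := by simpa [hl] using htr
    exact conjugate_of_diagonal_real hS' hg' hl hm hne
  · -- `conj l` is also a root of the real polynomial `(x - l) (x - m)`.
    have hm : m = star l := by
      have h1 : star l + star m = l + m := by
        rw [← star_add]; exact Complex.conj_eq_iff_im.mpr htr
      have h2 : star l * star m = 1 := by rw [← star_mul', hlm, star_one]
      have h3 : (star l - l) * (star l - m) = 0 := by
        linear_combination star l * h1 - h2 + hlm
      rcases mul_eq_zero.mp h3 with h | h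
      · exact absurd (Complex.conj_eq_iff_im.mp (sub_eq_zero.mp h)) hl
      · exact (sub_eq_zero.mp h).symm
    subst hm
    exact conjugate_of_diagonal_conj hS' hg' hl

/-- The matrices of a group satisfying the hypotheses of the theorem. -/
lemma admissible_of_subgroup (G : Subgroup (Matrix.SpecialLinearGroup (Fin 2) ℂ))
    (htr : ∀ g ∈ G, ∃ r : ℝ, Matrix.trace (g : Matrix (Fin 2) (Fin 2) ℂ) = (r : ℂ))
    (hnoline : ¬ ∃ ℓ : Submodule ℂ (Fin 2 → ℂ), Module.finrank ℂ ℓ = 1 ∧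
      ∀ g ∈ G, Submodule.map (Matrix.mulVecLin (g : Matrix (Fin 2) (Fin 2) ℂ)) ℓ = ℓ) :
    Admissible ((fun g : Matrix.SpecialLinearGroup (Fin 2) ℂ => (g : M2)) '' (G : Set _)) := by
  refine ⟨?_, ?_, ?_, ?_⟩
  · rintro _ ⟨g, hg, rfl⟩ _ ⟨h, hh, rfl⟩
    exact ⟨g * h, G.mul_mem hg hh, Matrix.SpecialLinearGroup.coe_mul g h⟩
  · rintro _ ⟨g, hg, rfl⟩
    exact g.det_coe
  · rintro _ ⟨g, hg, rfl⟩
    obtain ⟨r, hr⟩ := htr g hg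
    simp only [hr, Complex.ofReal_im]
  · intro v hv
    by_contra! hall
    refine hnoline ⟨Submodule.span ℂ {v}, finrank_span_singleton hv, fun g hg => ?_⟩
    obtain ⟨c, hc⟩ := exists_eigen_of_cross_eq_zero hv (hall _ ⟨g, hg, rfl⟩)
    have hc0 : c ≠ 0 := by
      rintro rfl
      rw [zero_smul] at hc
      refine hv (eq_zero_of_mulVec_eq_zero ?_ hc)
      rw [g.det_coe]; exact one_ne_zero
    rw [Submodule.map_span, Set.image_singleton, mulVecLin_apply, hc]
    exact Submodule.span_singleton_smul_eq (IsUnit.mk0 c hc0) v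

end RealTrace

/-- A subgroup of SL(2,ℂ) all of whose elements have real trace and which has no
common invariant line in `ℂ²` is conjugate (in GL(2,ℂ)) into SL(2,ℝ) or into SU(2). -/
theorem real_trace_subgroup_conjugate_into_sl2r_or_su2
    (G : Subgroup (Matrix.SpecialLinearGroup (Fin 2) ℂ))
    (htr : ∀ g ∈ G, ∃ r : ℝ, Matrix.trace (g : Matrix (Fin 2) (Fin 2) ℂ) = (r : ℂ))
    (hnoline : ¬ ∃ ℓ : Submodule ℂ (Fin 2 → ℂ), Module.finrank ℂ ℓ = 1 ∧
      ∀ g ∈ G, Submodule.map (Matrix.mulVecLin (g : Matrix (Fin 2) (Fin 2) ℂ)) ℓ = ℓ) :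
    ∃ M : Matrix.GeneralLinearGroup (Fin 2) ℂ,
      (∀ g ∈ G, ∀ i j : Fin 2,
        (((M : Matrix (Fin 2) (Fin 2) ℂ) * (g : Matrix (Fin 2) (Fin 2) ℂ) *
          ((M⁻¹ : Matrix.GeneralLinearGroup (Fin 2) ℂ) : Matrix (Fin 2) (Fin 2) ℂ)) i j).im = 0) ∨
      (∀ g ∈ G,
        (M : Matrix (Fin 2) (Fin 2) ℂ) * (g : Matrix (Fin 2) (Fin 2) ℂ) *
          ((M⁻¹ : Matrix.GeneralLinearGroup (Fin 2) ℂ) : Matrix (Fin 2) (Fin 2) ℂ) ∈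
          Matrix.unitaryGroup (Fin 2) ℂ) := by
  obtain ⟨M, N, hMN, h⟩ := (RealTrace.admissible_of_subgroup G htr hnoline).conjugable
  refine ⟨⟨M, N, hMN, mul_eq_one_comm.mp hMN⟩, ?_⟩
  rcases h with h | h
  · exact Or.inl fun g hg i j => h _ ⟨g, hg, rfl⟩ i j
  · exact Or.inr fun g hg => h _ ⟨g, hg, rfl⟩
end

section
/- Let F₁, F₂, F₃ ∈ SL(2,ℂ) each have trace zero, and suppose that tr(F₁·F₂), tr(F₂·F₃), and tr(F₁·F₃) are all real, that F₁·F₂ and F₂·F₃ have no common eigenvector in ℂ², and that there is no M ∈ SL(2,ℂ) for which M·(F₁F₂)·M⁻¹ and M·(F₂F₃)·M⁻¹ are both unitary. Then there exists M ∈ SL(2,ℂ) such that for each i ∈ {1,2,3}, either every entry of M·Fᵢ·M⁻¹ is real, or every entry of M·Fᵢ·M⁻¹ is purely imaginary. -/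
/-!
Trace-zero elements of `SL(2,ℂ)` have eigenvalues `±i`, so after a conjugation `F₂ = diag(i, -i)`.
The real traces then give `F₁ = (is, b; c, -is)` and `F₃ = (it, d; e, -it)` with `s`, `t` real, so
that `bc = s² - 1`, `de = t² - 1` and `be + cd` are real. If `be = cd`, then `F₁F₂` and `F₂F₃` are
both combinations of the identity and one fixed matrix, hence share an eigenvector; so `be ≠ cd`.

The numbers `be` and `cd` have real sum and real product, so they are both real or complex
conjugate. Conjugation by `diag(l, l⁻¹)` replaces `(b, c)` by `(l²b, c/l²)`, likewise `(d, e)`, and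
`exists_scaling` shows that `l` can be chosen such that one of the following holds:
* `b, c, d, e` are purely imaginary, and then so are all three matrices;
* `c = conj b` and `e = conj d`: the matrices lie in `SU(1,1)`, which the Cayley transform conjugates
  into `SL(2,ℝ)`;
* `c = -conj b` and `e = -conj d`: the matrices lie in `SU(2)`, which is excluded.
-/

open Matrix

/-- A matrix is real-or-imaginary if all its entries are real, or all its entries
are purely imaginary. -/
def RealOrImaginary (g : Matrix (Fin 2) (Fin 2) ℂ) : Prop :=
  (∀ i j : Fin 2, (g i j).im = 0) ∨ (∀ i j : Fin 2, (g i j).re = 0)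

lemma exists_coe_eq (p q r u : ℂ) (h : p * u - q * r = 1) :
    ∃ M : Matrix.SpecialLinearGroup (Fin 2) ℂ,
      (M : Matrix (Fin 2) (Fin 2) ℂ) = !![p, q; r, u] :=
  ⟨⟨!![p, q; r, u], by rw [det_fin_two_of, h]⟩, rfl⟩

lemma coe_conj_eq (M X : Matrix.SpecialLinearGroup (Fin 2) ℂ) (p q r u : ℂ)
    (hM : (M : Matrix (Fin 2) (Fin 2) ℂ) = !![p, q; r, u]) :
    ((M * X * M⁻¹ : Matrix.SpecialLinearGroup (Fin 2) ℂ) : Matrix (Fin 2) (Fin 2) ℂ) =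
      !![p, q; r, u] * (X : Matrix (Fin 2) (Fin 2) ℂ) * !![u, -q; -r, p] := by
  rw [Matrix.SpecialLinearGroup.coe_mul, Matrix.SpecialLinearGroup.coe_mul,
    Matrix.SpecialLinearGroup.coe_inv, hM, adjugate_fin_two_of]

/-- The scalar core of the argument: the off-diagonal entries `(b, c)` and `(d, e)` can be rescaled
simultaneously so that they are all imaginary, or of `SU(1,1)` type, or of `SU(2)` type. -/
lemma exists_scaling (b c d e : ℂ) (hbc : (b * c).im = 0) (hde : (d * e).im = 0)
    (hsum : (b * e + c * d).im = 0) (hne : b * e ≠ c * d) :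
    ∃ m : ℂ, m ≠ 0 ∧
      (((m * b).re = 0 ∧ (c / m).re = 0 ∧ (m * d).re = 0 ∧ (e / m).re = 0) ∨
       (c / m = star (m * b) ∧ e / m = star (m * d)) ∨
       (c / m = -star (m * b) ∧ e / m = -star (m * d))) := by
  obtain ⟨ρ, hρ⟩ : ∃ ρ : ℝ, b * c = ρ := ⟨(b * c).re, Complex.ext rfl (by simpa using hbc)⟩
  obtain ⟨σ, hσ⟩ : ∃ σ : ℝ, d * e = σ := ⟨(d * e).re, Complex.ext rfl (by simpa using hde)⟩
  by_cases hx : (b * e).im = 0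
  · have hy : (c * d).im = 0 := by
      rw [Complex.add_im] at hsum; linarith
    obtain ⟨x, hx'⟩ : ∃ x : ℝ, b * e = x := ⟨(b * e).re, Complex.ext rfl (by simpa using hx)⟩
    obtain ⟨y, hy'⟩ : ∃ y : ℝ, c * d = y := ⟨(c * d).re, Complex.ext rfl (by simpa using hy)⟩
    by_cases hb : b = 0
    · subst hb
      have hcd : c * d ≠ 0 := fun h => hne (by rw [h, zero_mul])
      have hc : c ≠ 0 := left_ne_zero_of_mul hcd
      have hd : d ≠ 0 := right_ne_zero_of_mul hcd
      refine ⟨Complex.I * c, mul_ne_zero Complex.I_ne_zero hc, Or.inl ⟨by simp, ?_, ?_, ?_⟩⟩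
      · rw [show c / (Complex.I * c) = -Complex.I by field_simp; simp]; simp
      · rw [mul_assoc, hy']; simp
      · have : e / (Complex.I * c) = -Complex.I * ((σ / y : ℝ) : ℂ) := by
          push_cast
          rw [← hσ, ← hy']; field_simp; simp
        rw [this]; simp
    · have key : ∃ k : ℝ, d = k * b := by
        by_cases he : e = 0
        · subst he
          have hcd : c * d ≠ 0 := fun h => hne (by rw [h, mul_zero])
          have hc : c ≠ 0 := left_ne_zero_of_mul hcd
          refine ⟨y / ρ, ?_⟩
          push_cast
          rw [← hρ, ← hy']; field_simp
        · refine ⟨σ / x, ?_⟩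
          push_cast
          rw [← hσ, ← hx']; field_simp
      obtain ⟨k, hk⟩ := key
      refine ⟨Complex.I / b, div_ne_zero Complex.I_ne_zero hb, Or.inl ⟨?_, ?_, ?_, ?_⟩⟩
      · rw [div_mul_cancel₀ _ hb]; simp
      · rw [show c / (Complex.I / b) = -Complex.I * (b * c) by field_simp; simp, hρ]; simp
      · rw [show Complex.I / b * d = Complex.I * k by rw [hk]; field_simp]; simp
      · rw [show e / (Complex.I / b) = -Complex.I * (b * e) by field_simp; simp, hx']; simp
  · -- `be` is not real and `be`, `cd` have real sum and product, so they are conjugate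
    have hprod : ((b * e) * (c * d)).im = 0 := by
      rw [show (b * e) * (c * d) = (b * c) * (d * e) by ring, hρ, hσ, ← Complex.ofReal_mul]
      exact Complex.ofReal_im _
    have hconj : b * e = star (c * d) := by
      rw [Complex.add_im] at hsum
      rw [Complex.mul_im] at hprod
      have him : (c * d).im = -(b * e).im := by linarith
      rw [him] at hprod
      have h0 : (b * e).im * ((c * d).re - (b * e).re) = 0 := by linarith
      have hre : (c * d).re - (b * e).re = 0 := (mul_eq_zero.mp h0).resolve_left hx
      apply Complex.ext
      · rw [Complex.star_def, Complex.conj_re]; linarith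
      · rw [Complex.star_def, Complex.conj_im, him, neg_neg]
    have hbe : b * e ≠ 0 := fun h => hx (by rw [h]; simp)
    have hcd : c * d ≠ 0 := fun h => hbe (by rw [hconj, h, star_zero])
    have hb : b ≠ 0 := left_ne_zero_of_mul hbe
    have hc : c ≠ 0 := left_ne_zero_of_mul hcd
    have hsb : star b ≠ 0 := star_ne_zero.mpr hb
    have hρ0 : ρ ≠ 0 := by
      intro h; rw [h] at hρ; exact mul_ne_zero hb hc (by simpa using hρ)
    -- the positive scale with `|m b| = |c / m|`
    set m : ℝ := √|ρ| / ‖b‖ with hm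
    have hm0 : m ≠ 0 := by positivity
    have hmC : (m : ℂ) ≠ 0 := Complex.ofReal_ne_zero.mpr hm0
    have hmsq : (m : ℂ) * m * (b * star b) = (|ρ| : ℝ) := by
      have h1 : b * star b = ((‖b‖ ^ 2 : ℝ) : ℂ) := by
        rw [Complex.star_def, Complex.mul_conj, Complex.normSq_eq_norm_sq]
      rw [h1, ← Complex.ofReal_mul, ← Complex.ofReal_mul]
      congr 1
      have hn : ‖b‖ ≠ 0 := norm_ne_zero_iff.mpr hb
      rw [hm]; field_simp
      exact Real.sq_sqrt (abs_nonneg ρ)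
    have hsm : star (m : ℂ) = m := Complex.conj_ofReal m
    refine ⟨m, hmC, Or.inr ?_⟩
    rw [star_mul', star_mul', hsm]
    rcases lt_or_gt_of_ne hρ0 with hneg | hpos
    · right
      have hc' : c = -(m * m * star b) := by
        apply mul_left_cancel₀ hb
        rw [abs_of_neg hneg, Complex.ofReal_neg] at hmsq
        linear_combination hρ + hmsq
      have he' : e = -(m * m * star d) := by
        apply mul_left_cancel₀ hb
        rw [hconj, hc']
        simp only [star_mul', star_neg, star_star, hsm]; ring
      constructor
      · rw [div_eq_iff hmC, hc']; ring
      · rw [div_eq_iff hmC, he']; ring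
    · left
      have hc' : c = m * m * star b := by
        apply mul_left_cancel₀ hb
        rw [abs_of_pos hpos] at hmsq
        linear_combination hρ - hmsq
      have he' : e = m * m * star d := by
        apply mul_left_cancel₀ hb
        rw [hconj, hc']
        simp only [star_mul', star_star, hsm]; ring
      constructor
      · rw [div_eq_iff hmC, hc']; ring
      · rw [div_eq_iff hmC, he']; ring

lemma exists_sq_eq (z : ℂ) : ∃ w : ℂ, w * w = z := by
  obtain ⟨w, hw⟩ := IsAlgClosed.exists_pow_nat_eq z (n := 2) two_pos
  exact ⟨w, by rw [← hw, sq]⟩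

/-- The rows of the conjugating matrix are left eigenvectors of `F` for `i` and `-i`, taken from
a nonzero row of `F ± i`. -/
lemma exists_conj_diag (F : Matrix.SpecialLinearGroup (Fin 2) ℂ)
    (h : trace (F : Matrix (Fin 2) (Fin 2) ℂ) = 0) :
    ∃ M : Matrix.SpecialLinearGroup (Fin 2) ℂ,
      ((M * F * M⁻¹ : Matrix.SpecialLinearGroup (Fin 2) ℂ) : Matrix (Fin 2) (Fin 2) ℂ) =
        !![Complex.I, 0; 0, -Complex.I] := by
  have hI := Complex.I_mul_I
  have hI0 := Complex.I_ne_zero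
  -- it suffices to find an intertwining matrix
  suffices hs : ∃ M : Matrix.SpecialLinearGroup (Fin 2) ℂ, (M : Matrix (Fin 2) (Fin 2) ℂ) * F =
      !![Complex.I, 0; 0, -Complex.I] * (M : Matrix (Fin 2) (Fin 2) ℂ) by
    obtain ⟨M, hM⟩ := hs
    refine ⟨M, ?_⟩
    rw [Matrix.SpecialLinearGroup.coe_mul, Matrix.SpecialLinearGroup.coe_mul, hM, Matrix.mul_assoc,
      ← Matrix.SpecialLinearGroup.coe_mul, mul_inv_cancel, Matrix.SpecialLinearGroup.coe_one, Matrix.mul_one]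
  have hdet := F.det_coe
  rw [det_fin_two] at hdet
  rw [trace_fin_two] at h
  have hF := eta_fin_two (F : Matrix (Fin 2) (Fin 2) ℂ)
  generalize (F : Matrix (Fin 2) (Fin 2) ℂ) 0 0 = p at *
  generalize (F : Matrix (Fin 2) (Fin 2) ℂ) 0 1 = q at *
  generalize (F : Matrix (Fin 2) (Fin 2) ℂ) 1 0 = r at *
  generalize (F : Matrix (Fin 2) (Fin 2) ℂ) 1 1 = u at *
  obtain rfl : u = -p := by linear_combination h
  rw [hF]
  by_cases hq : q = 0
  · by_cases hr : r = 0
    · subst hq hr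
      have hp : (p - Complex.I) * (p + Complex.I) = 0 := by linear_combination -hdet - hI
      rcases mul_eq_zero.mp hp with hp | hp
      · obtain rfl : p = Complex.I := by linear_combination hp
        exact ⟨1, by simp⟩
      · obtain rfl : p = -Complex.I := by linear_combination hp
        obtain ⟨M, hM⟩ := exists_coe_eq 0 1 (-1) 0 (by norm_num)
        exact ⟨M, by rw [hM]; simp⟩
    · obtain ⟨k, hk⟩ := exists_sq_eq (1 / (-2 * Complex.I * r))
      have hk' : k * k * (-2 * Complex.I * r) = 1 := by rw [hk]; field_simp
      obtain ⟨M, hM⟩ := exists_coe_eq (k * r) (k * (-p + Complex.I)) (k * r)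
        (k * (-p - Complex.I)) (by linear_combination hk')
      refine ⟨M, ?_⟩
      rw [hM]
      ext i j
      fin_cases i <;> fin_cases j <;> simp [Matrix.mul_apply, Fin.sum_univ_two]
      · ring
      · linear_combination -k * hdet - k * hI
      · ring
      · linear_combination -k * hdet - k * hI
  · obtain ⟨k, hk⟩ := exists_sq_eq (1 / (2 * Complex.I * q))
    have hk' : k * k * (2 * Complex.I * q) = 1 := by rw [hk]; field_simp
    obtain ⟨M, hM⟩ := exists_coe_eq (k * (p + Complex.I)) (k * q) (k * (p - Complex.I)) (k * q)
      (by linear_combination hk')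
    refine ⟨M, ?_⟩
    rw [hM]
    ext i j
    fin_cases i <;> fin_cases j <;> simp [Matrix.mul_apply, Fin.sum_univ_two]
    · linear_combination -k * hdet - k * hI
    · ring
    · linear_combination -k * hdet - k * hI
    · ring

lemma exists_diag_scaling (m : ℂ) (hm : m ≠ 0) :
    ∃ M : Matrix.SpecialLinearGroup (Fin 2) ℂ, ∀ (X : Matrix.SpecialLinearGroup (Fin 2) ℂ) (x y z w : ℂ),
      (X : Matrix (Fin 2) (Fin 2) ℂ) = !![x, y; z, w] →
      ((M * X * M⁻¹ : Matrix.SpecialLinearGroup (Fin 2) ℂ) : Matrix (Fin 2) (Fin 2) ℂ) =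
        !![x, m * y; z / m, w] := by
  obtain ⟨l, rfl⟩ := exists_sq_eq m
  have hl : l ≠ 0 := left_ne_zero_of_mul hm
  obtain ⟨M, hM⟩ := exists_coe_eq l 0 0 l⁻¹ (by simp [hl])
  refine ⟨M, fun X x y z w hX => ?_⟩
  rw [coe_conj_eq M X _ _ _ _ hM, hX]
  ext i j
  fin_cases i <;> fin_cases j <;> simp [Matrix.mul_apply, Fin.sum_univ_two] <;> field_simp

/-- The Cayley transform conjugates the trace-zero elements of `SU(1,1)` into `SL(2,ℝ)`. -/
lemma exists_cayley :
    ∃ M : Matrix.SpecialLinearGroup (Fin 2) ℂ, ∀ (X : Matrix.SpecialLinearGroup (Fin 2) ℂ) (s : ℝ) (b : ℂ),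
      (X : Matrix (Fin 2) (Fin 2) ℂ) = !![Complex.I * s, b; star b, -(Complex.I * s)] →
      RealOrImaginary
        ((M * X * M⁻¹ : Matrix.SpecialLinearGroup (Fin 2) ℂ) : Matrix (Fin 2) (Fin 2) ℂ) := by
  have hI := Complex.I_mul_I
  have hI0 := Complex.I_ne_zero
  obtain ⟨k, hk⟩ := exists_sq_eq (1 / (2 * Complex.I))
  have hk' : k * k = -Complex.I / 2 := by rw [hk]; field_simp; simp
  obtain ⟨M, hM⟩ := exists_coe_eq (k * Complex.I) (k * Complex.I) (-k) k
    (by linear_combination 2 * Complex.I * hk' - hI)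
  refine ⟨M, fun X s b hX => Or.inl ?_⟩
  have hb : b = b.re + b.im * Complex.I := (Complex.re_add_im b).symm
  have hsb : star b = b.re - b.im * Complex.I := by
    apply Complex.ext <;> simp
  have key : ((M * X * M⁻¹ : Matrix.SpecialLinearGroup (Fin 2) ℂ) : Matrix (Fin 2) (Fin 2) ℂ) =
      !![((b.re : ℝ) : ℂ), ((s - b.im : ℝ) : ℂ); ((-s - b.im : ℝ) : ℂ), ((-b.re : ℝ) : ℂ)] := by
    rw [coe_conj_eq M X _ _ _ _ hM, hX, hsb]
    generalize b.re = β at *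
    generalize b.im = γ at *
    rw [hb]
    have hI3 : Complex.I ^ 3 = -Complex.I := by rw [pow_succ, Complex.I_sq]; ring
    have hk2 : k ^ 2 = -Complex.I / 2 := by rw [sq, hk']
    ext i j
    fin_cases i <;> fin_cases j <;> simp [Matrix.mul_apply, Fin.sum_univ_two] <;> ring_nf <;>
      simp only [hk2, hI3] <;> ring_nf <;>
      simp only [Complex.I_sq] <;> ring_nf
  rw [key]
  intro i j
  fin_cases i <;> fin_cases j <;> simp

/-- The theorem in the normal form `F₂ = diag(i, -i)`. -/
lemma coplanar_of_diag
    (F₁ F₂ F₃ : Matrix.SpecialLinearGroup (Fin 2) ℂ)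
    (h₁ : Matrix.trace (F₁ : Matrix (Fin 2) (Fin 2) ℂ) = 0)
    (h₂ : (F₂ : Matrix (Fin 2) (Fin 2) ℂ) = !![Complex.I, 0; 0, -Complex.I])
    (h₃ : Matrix.trace (F₃ : Matrix (Fin 2) (Fin 2) ℂ) = 0)
    (htr₁₂ : ∃ r : ℝ, Matrix.trace ((F₁ * F₂ : Matrix.SpecialLinearGroup (Fin 2) ℂ) :
        Matrix (Fin 2) (Fin 2) ℂ) = (r : ℂ))
    (htr₂₃ : ∃ r : ℝ, Matrix.trace ((F₂ * F₃ : Matrix.SpecialLinearGroup (Fin 2) ℂ) :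
        Matrix (Fin 2) (Fin 2) ℂ) = (r : ℂ))
    (htr₁₃ : ∃ r : ℝ, Matrix.trace ((F₁ * F₃ : Matrix.SpecialLinearGroup (Fin 2) ℂ) :
        Matrix (Fin 2) (Fin 2) ℂ) = (r : ℂ))
    (hnocommon : ¬ ∃ v : Fin 2 → ℂ, v ≠ 0 ∧
      (∃ μ : ℂ, Matrix.mulVec ((F₁ * F₂ : Matrix.SpecialLinearGroup (Fin 2) ℂ) :
          Matrix (Fin 2) (Fin 2) ℂ) v = μ • v) ∧
      (∃ ν : ℂ, Matrix.mulVec ((F₂ * F₃ : Matrix.SpecialLinearGroup (Fin 2) ℂ) :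
          Matrix (Fin 2) (Fin 2) ℂ) v = ν • v))
    (hnotunitary : ¬ ∃ M : Matrix.SpecialLinearGroup (Fin 2) ℂ,
      ((M * (F₁ * F₂) * M⁻¹ : Matrix.SpecialLinearGroup (Fin 2) ℂ) :
          Matrix (Fin 2) (Fin 2) ℂ) ∈ Matrix.unitaryGroup (Fin 2) ℂ ∧
      ((M * (F₂ * F₃) * M⁻¹ : Matrix.SpecialLinearGroup (Fin 2) ℂ) :
          Matrix (Fin 2) (Fin 2) ℂ) ∈ Matrix.unitaryGroup (Fin 2) ℂ) :
    ∃ M : Matrix.SpecialLinearGroup (Fin 2) ℂ,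
      RealOrImaginary ((M * F₁ * M⁻¹ : Matrix.SpecialLinearGroup (Fin 2) ℂ) :
        Matrix (Fin 2) (Fin 2) ℂ) ∧
      RealOrImaginary ((M * F₂ * M⁻¹ : Matrix.SpecialLinearGroup (Fin 2) ℂ) :
        Matrix (Fin 2) (Fin 2) ℂ) ∧
      RealOrImaginary ((M * F₃ * M⁻¹ : Matrix.SpecialLinearGroup (Fin 2) ℂ) :
        Matrix (Fin 2) (Fin 2) ℂ) := by
  have hI := Complex.I_mul_I
  -- shape of a trace-zero matrix whose product with `diag(i, -i)` has real trace
  have shape : ∀ F : Matrix.SpecialLinearGroup (Fin 2) ℂ, trace (F : Matrix (Fin 2) (Fin 2) ℂ) = 0 →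
      (∃ r : ℝ, trace ((F : Matrix (Fin 2) (Fin 2) ℂ) * !![Complex.I, 0; 0, -Complex.I]) = r) →
      ∃ (s : ℝ) (b c : ℂ), (F : Matrix (Fin 2) (Fin 2) ℂ) =
        !![Complex.I * s, b; c, -(Complex.I * s)] ∧ (b * c).im = 0 := by
    rintro F hF ⟨r, hr⟩
    have hdet := F.det_coe
    rw [det_fin_two] at hdet
    rw [trace_fin_two] at hF
    simp [trace_fin_two, Matrix.mul_apply, Fin.sum_univ_two] at hr
    have h00 : (F : Matrix (Fin 2) (Fin 2) ℂ) 0 0 = Complex.I * ((-r / 2 : ℝ) : ℂ) := by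
      push_cast
      linear_combination (-Complex.I / 2) * hr + hF / 2
        + ((F : Matrix (Fin 2) (Fin 2) ℂ) 0 0 - (F : Matrix (Fin 2) (Fin 2) ℂ) 1 1) / 2 * hI
    have h11 : (F : Matrix (Fin 2) (Fin 2) ℂ) 1 1 = -(Complex.I * ((-r / 2 : ℝ) : ℂ)) := by
      linear_combination hF - h00
    refine ⟨-r / 2, (F : Matrix (Fin 2) (Fin 2) ℂ) 0 1, (F : Matrix (Fin 2) (Fin 2) ℂ) 1 0, ?_, ?_⟩
    · rw [← h11, ← h00]; exact eta_fin_two _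
    · have : (F : Matrix (Fin 2) (Fin 2) ℂ) 0 1 * (F : Matrix (Fin 2) (Fin 2) ℂ) 1 0 =
          (((-r / 2) * (-r / 2) - 1 : ℝ) : ℂ) := by
        rw [h00, h11] at hdet
        push_cast at hdet ⊢
        linear_combination -hdet - (-r / 2 : ℂ) * (-r / 2) * hI
      rw [this]; exact Complex.ofReal_im _
  rw [Matrix.SpecialLinearGroup.coe_mul] at htr₁₂ htr₂₃ htr₁₃
  rw [trace_mul_comm] at htr₂₃
  rw [h₂] at htr₁₂ htr₂₃
  obtain ⟨s, b, c, hF1, hbc⟩ := shape F₁ h₁ htr₁₂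
  obtain ⟨t, d, e, hF3, hde⟩ := shape F₃ h₃ htr₂₃
  have hP : ((F₁ * F₂ : Matrix.SpecialLinearGroup (Fin 2) ℂ) : Matrix (Fin 2) (Fin 2) ℂ) =
      !![-(s : ℂ), -(Complex.I * b); Complex.I * c, -(s : ℂ)] := by
    rw [Matrix.SpecialLinearGroup.coe_mul, hF1, h₂]
    ext i j
    fin_cases i <;> fin_cases j <;> simp [Matrix.mul_apply, Fin.sum_univ_two]
    · linear_combination (s : ℂ) * hI
    · ring
    · ring
    · linear_combination (s : ℂ) * hI
  have hQ : ((F₂ * F₃ : Matrix.SpecialLinearGroup (Fin 2) ℂ) : Matrix (Fin 2) (Fin 2) ℂ) =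
      !![-(t : ℂ), Complex.I * d; -(Complex.I * e), -(t : ℂ)] := by
    rw [Matrix.SpecialLinearGroup.coe_mul, hF3, h₂]
    ext i j
    fin_cases i <;> fin_cases j <;> simp [Matrix.mul_apply, Fin.sum_univ_two]
    · linear_combination (t : ℂ) * hI
    · linear_combination (t : ℂ) * hI
  have hsum : (b * e + c * d).im = 0 := by
    obtain ⟨r, hr⟩ := htr₁₃
    rw [hF1, hF3] at hr
    simp [trace_fin_two] at hr
    have : b * e + c * d = ((r + 2 * s * t : ℝ) : ℂ) := by
      push_cast
      linear_combination hr - 2 * (s : ℂ) * t * hI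
    rw [this]; exact Complex.ofReal_im _
  have hne : b * e ≠ c * d := by
    intro hEq
    apply hnocommon
    rw [hP, hQ]
    -- for `(y, z) ≠ 0`, the vector `(β, γ)` with `β² = y` and `γ² = z` is an eigenvector of
    -- `(0, y; z, 0)`, and of every antidiagonal matrix proportional to it
    have aux : ∀ y z y' z' : ℂ, y * z' = z * y' → ¬ (y = 0 ∧ z = 0) →
        ∃ v : Fin 2 → ℂ, v ≠ 0 ∧ (∃ μ : ℂ, y * v 1 = μ * v 0 ∧ z * v 0 = μ * v 1) ∧
          (∃ ν : ℂ, y' * v 1 = ν * v 0 ∧ z' * v 0 = ν * v 1) := by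
      intro y z y' z' hyz h0
      obtain ⟨β, rfl⟩ := exists_sq_eq y
      obtain ⟨γ, rfl⟩ := exists_sq_eq z
      refine ⟨![β, γ], ?_, ⟨β * γ, by simp; ring, by simp; ring⟩, ?_⟩
      · intro hv
        have hβ : β = 0 := congrFun hv 0
        have hγ : γ = 0 := congrFun hv 1
        exact h0 ⟨by rw [hβ, mul_zero], by rw [hγ, mul_zero]⟩
      · by_cases hβ : β = 0
        · subst hβ
          have hγ : γ ≠ 0 := fun h => h0 ⟨by simp, by rw [h, mul_zero]⟩
          have hy' : y' = 0 := by
            have : γ * γ * y' = 0 := by linear_combination -hyz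
            exact (mul_eq_zero.mp this).resolve_left (mul_ne_zero hγ hγ)
          exact ⟨0, by simp [hy'], by simp⟩
        · refine ⟨y' * γ / β, by simp; field_simp, ?_⟩
          simp
          field_simp
          linear_combination hyz
    obtain ⟨v, hv, ⟨μ, hμ1, hμ2⟩, ν, hν1, hν2⟩ :
        ∃ v : Fin 2 → ℂ, v ≠ 0 ∧ (∃ μ : ℂ, b * v 1 = -μ * v 0 ∧ c * v 0 = μ * v 1) ∧
          (∃ ν : ℂ, d * v 1 = ν * v 0 ∧ e * v 0 = -ν * v 1) := by
      by_cases h0 : b = 0 ∧ c = 0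
      · by_cases h0' : d = 0 ∧ e = 0
        · exact ⟨![1, 0], fun h => one_ne_zero (congrFun h 0),
            ⟨0, by simp [h0.1], by simp [h0.2]⟩, ⟨0, by simp [h0'.1], by simp [h0'.2]⟩⟩
        · obtain ⟨v, hv, ⟨μ, h1, h2⟩, ν, h3, h4⟩ := aux d (-e) (-b) c
            (by linear_combination -hEq) (by simpa using h0')
          exact ⟨v, hv, ⟨ν, by linear_combination -h3, h4⟩, ⟨μ, h1, by linear_combination -h2⟩⟩
      · obtain ⟨v, hv, ⟨μ, h1, h2⟩, ν, h3, h4⟩ := aux (-b) c d (-e)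
          (by linear_combination hEq) (by simpa using h0)
        exact ⟨v, hv, ⟨μ, by linear_combination -h1, h2⟩, ⟨ν, h3, by linear_combination -h4⟩⟩
    refine ⟨v, hv, ⟨-s + Complex.I * μ, ?_⟩, ⟨-t + Complex.I * ν, ?_⟩⟩
    · ext i
      fin_cases i <;> simp [mulVec, dotProduct, Fin.sum_univ_two]
      · linear_combination -Complex.I * hμ1
      · linear_combination Complex.I * hμ2
    · ext i
      fin_cases i <;> simp [mulVec, dotProduct, Fin.sum_univ_two]
      · linear_combination Complex.I * hν1
      · linear_combination -Complex.I * hν2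
  obtain ⟨m, hm, hcases⟩ := exists_scaling b c d e hbc hde hsum hne
  obtain ⟨D, hD⟩ := exists_diag_scaling m hm
  have hD1 := hD F₁ _ _ _ _ hF1
  have hD2 := hD F₂ _ _ _ _ h₂
  have hD3 := hD F₃ _ _ _ _ hF3
  rcases hcases with ⟨hb, hc, hd, he⟩ | ⟨hc, he⟩ | ⟨hc, he⟩
  · refine ⟨D, Or.inr ?_, Or.inr ?_, Or.inr ?_⟩
    · rw [hD1]; intro i j; fin_cases i <;> fin_cases j <;> simp <;> simpa using ‹_›
    · rw [hD2]; intro i j; fin_cases i <;> fin_cases j <;> simp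
    · rw [hD3]; intro i j; fin_cases i <;> fin_cases j <;> simp <;> simpa using ‹_›
  · obtain ⟨C, hC⟩ := exists_cayley
    have hmul : ∀ X : Matrix.SpecialLinearGroup (Fin 2) ℂ,
        (C * D) * X * (C * D)⁻¹ = C * (D * X * D⁻¹) * C⁻¹ := fun X => by group
    refine ⟨C * D, ?_, ?_, ?_⟩
    · rw [hmul]; exact hC _ s (m * b) (by rw [hD1, hc])
    · rw [hmul]; exact hC _ 1 0 (by rw [hD2]; simp)
    · rw [hmul]; exact hC _ t (m * d) (by rw [hD3, he])
  · exfalso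
    apply hnotunitary
    -- a trace-zero element of this shape is skew-Hermitian of determinant one, hence unitary
    have hU : ∀ (X : Matrix.SpecialLinearGroup (Fin 2) ℂ) (s : ℝ) (b : ℂ),
        (X : Matrix (Fin 2) (Fin 2) ℂ) = !![Complex.I * s, b; -star b, -(Complex.I * s)] →
        (X : Matrix (Fin 2) (Fin 2) ℂ) ∈ unitaryGroup (Fin 2) ℂ := by
      intro X s b hX
      have hdet := X.det_coe
      rw [hX, det_fin_two_of] at hdet
      rw [mem_unitaryGroup_iff, hX]
      simp only [Complex.star_def] at hdet ⊢
      ext i j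
      fin_cases i <;> fin_cases j <;>
        simp [Matrix.mul_apply, Fin.sum_univ_two, star_apply]
      · linear_combination hdet
      · ring
      · ring
      · linear_combination hdet
    have h1 := hU _ s (m * b) (by rw [hD1, hc])
    have h2 := hU _ 1 0 (by rw [hD2]; simp)
    have h3 := hU _ t (m * d) (by rw [hD3, he])
    refine ⟨D, ?_, ?_⟩
    · rw [show D * (F₁ * F₂) * D⁻¹ = (D * F₁ * D⁻¹) * (D * F₂ * D⁻¹) by group,
        Matrix.SpecialLinearGroup.coe_mul]
      exact mul_mem h1 h2
    · rw [show D * (F₂ * F₃) * D⁻¹ = (D * F₂ * D⁻¹) * (D * F₃ * D⁻¹) by group,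
        Matrix.SpecialLinearGroup.coe_mul]
      exact mul_mem h2 h3

/-- Three half-turns `F₁, F₂, F₃` whose pairwise products have real trace, such
that `F₁F₂` and `F₂F₃` have no common eigenvector and are not simultaneously
unitarizable, can be simultaneously conjugated so that each becomes a real matrix
or a purely imaginary matrix (i.e. their axes lie in a common geodesic plane). -/
theorem half_turn_axes_coplanar
    (F₁ F₂ F₃ : Matrix.SpecialLinearGroup (Fin 2) ℂ)
    (h₁ : Matrix.trace (F₁ : Matrix (Fin 2) (Fin 2) ℂ) = 0)
    (h₂ : Matrix.trace (F₂ : Matrix (Fin 2) (Fin 2) ℂ) = 0)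
    (h₃ : Matrix.trace (F₃ : Matrix (Fin 2) (Fin 2) ℂ) = 0)
    (htr₁₂ : ∃ r : ℝ, Matrix.trace ((F₁ * F₂ : Matrix.SpecialLinearGroup (Fin 2) ℂ) :
        Matrix (Fin 2) (Fin 2) ℂ) = (r : ℂ))
    (htr₂₃ : ∃ r : ℝ, Matrix.trace ((F₂ * F₃ : Matrix.SpecialLinearGroup (Fin 2) ℂ) :
        Matrix (Fin 2) (Fin 2) ℂ) = (r : ℂ))
    (htr₁₃ : ∃ r : ℝ, Matrix.trace ((F₁ * F₃ : Matrix.SpecialLinearGroup (Fin 2) ℂ) :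
        Matrix (Fin 2) (Fin 2) ℂ) = (r : ℂ))
    (hnocommon : ¬ ∃ v : Fin 2 → ℂ, v ≠ 0 ∧
      (∃ μ : ℂ, Matrix.mulVec ((F₁ * F₂ : Matrix.SpecialLinearGroup (Fin 2) ℂ) :
          Matrix (Fin 2) (Fin 2) ℂ) v = μ • v) ∧
      (∃ ν : ℂ, Matrix.mulVec ((F₂ * F₃ : Matrix.SpecialLinearGroup (Fin 2) ℂ) :
          Matrix (Fin 2) (Fin 2) ℂ) v = ν • v))
    (hnotunitary : ¬ ∃ M : Matrix.SpecialLinearGroup (Fin 2) ℂ,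
      ((M * (F₁ * F₂) * M⁻¹ : Matrix.SpecialLinearGroup (Fin 2) ℂ) :
          Matrix (Fin 2) (Fin 2) ℂ) ∈ Matrix.unitaryGroup (Fin 2) ℂ ∧
      ((M * (F₂ * F₃) * M⁻¹ : Matrix.SpecialLinearGroup (Fin 2) ℂ) :
          Matrix (Fin 2) (Fin 2) ℂ) ∈ Matrix.unitaryGroup (Fin 2) ℂ) :
    ∃ M : Matrix.SpecialLinearGroup (Fin 2) ℂ,
      RealOrImaginary ((M * F₁ * M⁻¹ : Matrix.SpecialLinearGroup (Fin 2) ℂ) :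
        Matrix (Fin 2) (Fin 2) ℂ) ∧
      RealOrImaginary ((M * F₂ * M⁻¹ : Matrix.SpecialLinearGroup (Fin 2) ℂ) :
        Matrix (Fin 2) (Fin 2) ℂ) ∧
      RealOrImaginary ((M * F₃ * M⁻¹ : Matrix.SpecialLinearGroup (Fin 2) ℂ) :
        Matrix (Fin 2) (Fin 2) ℂ) := by
  obtain ⟨N, hN⟩ := exists_conj_diag F₂ h₂
  have htr : ∀ X : Matrix.SpecialLinearGroup (Fin 2) ℂ,
      trace ((N * X * N⁻¹ : Matrix.SpecialLinearGroup (Fin 2) ℂ) : Matrix (Fin 2) (Fin 2) ℂ) =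
        trace (X : Matrix (Fin 2) (Fin 2) ℂ) := by
    intro X
    rw [Matrix.SpecialLinearGroup.coe_mul, trace_mul_comm, ← Matrix.SpecialLinearGroup.coe_mul,
      show N⁻¹ * (N * X) = X by group]
  have hprod : ∀ X Y : Matrix.SpecialLinearGroup (Fin 2) ℂ,
      (N * X * N⁻¹) * (N * Y * N⁻¹) = N * (X * Y) * N⁻¹ := fun X Y => by group
  have hcomp : ∀ M X : Matrix.SpecialLinearGroup (Fin 2) ℂ,
      M * (N * X * N⁻¹) * M⁻¹ = (M * N) * X * (M * N)⁻¹ := fun M X => by group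
  have hvec : ∀ (X : Matrix.SpecialLinearGroup (Fin 2) ℂ) (v : Fin 2 → ℂ) (μ : ℂ),
      ((N * X * N⁻¹ : Matrix.SpecialLinearGroup (Fin 2) ℂ) : Matrix (Fin 2) (Fin 2) ℂ) *ᵥ v = μ • v →
      (X : Matrix (Fin 2) (Fin 2) ℂ) *ᵥ
          (((N⁻¹ : Matrix.SpecialLinearGroup (Fin 2) ℂ) : Matrix (Fin 2) (Fin 2) ℂ) *ᵥ v) =
        μ • (((N⁻¹ : Matrix.SpecialLinearGroup (Fin 2) ℂ) : Matrix (Fin 2) (Fin 2) ℂ) *ᵥ v) := by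
    intro X v μ h
    rw [← mulVec_smul, ← h, mulVec_mulVec, mulVec_mulVec, ← Matrix.SpecialLinearGroup.coe_mul,
      ← Matrix.SpecialLinearGroup.coe_mul, show N⁻¹ * (N * X * N⁻¹) = X * N⁻¹ by group]
  obtain ⟨M, hM1, hM2, hM3⟩ := coplanar_of_diag (N * F₁ * N⁻¹) (N * F₂ * N⁻¹) (N * F₃ * N⁻¹)
    (by rw [htr, h₁]) hN (by rw [htr, h₃])
    (by rw [hprod, htr]; exact htr₁₂) (by rw [hprod, htr]; exact htr₂₃)
    (by rw [hprod, htr]; exact htr₁₃)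
    (by
      rw [hprod, hprod]
      rintro ⟨v, hv, ⟨μ, hμ⟩, ν, hν⟩
      refine hnocommon ⟨_, ?_, ⟨μ, hvec _ v μ hμ⟩, ν, hvec _ v ν hν⟩
      intro h0
      apply hv
      have := congrArg (fun w => (N : Matrix (Fin 2) (Fin 2) ℂ) *ᵥ w) h0
      simpa only [mulVec_mulVec, ← Matrix.SpecialLinearGroup.coe_mul, mul_inv_cancel,
        Matrix.SpecialLinearGroup.coe_one, one_mulVec, mulVec_zero] using this)
    (by
      rw [hprod, hprod]
      rintro ⟨M, hM1, hM2⟩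
      rw [hcomp] at hM1 hM2
      exact hnotunitary ⟨M * N, hM1, hM2⟩)
  rw [hcomp] at hM1 hM2 hM3
  exact ⟨M * N, hM1, hM2, hM3⟩
end
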